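/- arXiv:2002.03512 — 11 statements merged into one kernel-verified Lean document; each statement's English description precedes it below -/
import Mathlib

section
/- Let A be a ring with a nonzero divisor ϖ such that ϖ lies in the Jacobson radical of A and A is integral over a Noetherian subring. Let g ∈ A be a nonzero divisor. For each integer j > 0 let A[ϖ^j/g] denote the A-subalgebra of A[1/(ϖg)] generated by ϖ^j/g, and set A^{j∘} := {x ∈ A[1/(ϖg)] : ∃ m ≥ 0 such that ϖ^m x^n ∈ A[ϖ^j/g] for all n ≥ 0}. Then the integral closure of A in A[1/(ϖg)] is equal to the intersection ⋂_{j>0} A^{j∘} inside A[1/(ϖg)]. -/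
/-!
Integral elements are power-bounded because a finitely generated `A`-submodule of `A[1/(ϖg)]` is
carried into `A[ϖ^j/g]` by a single power of `ϖ`.

Conversely, integrality can be tested in the residue fields `K` of `A[1/(ϖg)]`. If `x ∈ K` is not
integral over `A`, then `ϖ` and `x⁻¹` generate a proper ideal of `A[x⁻¹]`, because `ϖ` is in the
Jacobson radical. Contracting to a Noetherian subring `T` containing `ϖ`, `g` and `x⁻¹`, blowing up
this ideal and taking a component of the exceptional divisor, which has codimension one by Krull's
principal ideal theorem, we find a valuation `v` that is at most `1` on `A`, satisfies `v ϖ < 1`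
and `v x⁻¹ < 1`, and behaves on `T` like a valuation of rank one. Then `v (ϖ ^ j) ≤ v g` for some
`j`, so `v` is at most `1` on `A[ϖ^j/g]`, whereas `v (ϖ ^ m * x ^ n) > 1` for large `n`.
-/

theorem adjoin_toSubring_le_iff {R B : Type*} [CommRing R] [Ring B] [Algebra R B] {s : Set B}
    {S : Subring B} :
    (Algebra.adjoin R s).toSubring ≤ S ↔ (∀ r : R, algebraMap R B r ∈ S) ∧ s ⊆ S := by
  rw [Algebra.adjoin_eq_ring_closure, Subring.closure_le, Set.union_subset_iff,
    Set.range_subset_iff]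
  rfl

section Valuation

variable {K : Type*} [Field K]

/-- The valuation of `V` restricted to `s` behaves like one of rank one: every element of `s` of
valuation less than one is topologically nilpotent, as measured by the nonzero elements of `s`. -/
def IsArchimedeanOn (V : ValuationSubring K) (s : Set K) : Prop :=
  ∀ t ∈ s, V.valuation t < 1 → ∀ c ∈ s, c ≠ 0 → ∃ k : ℕ, V.valuation t ^ k ≤ V.valuation c

theorem IsArchimedeanOn.mono {V : ValuationSubring K} {s t : Set K} (ht : IsArchimedeanOn V t)
    (hst : s ⊆ t) : IsArchimedeanOn V s :=
  fun a ha hVa c hc => ht a (hst ha) hVa c (hst hc)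

theorem exists_valuationSubring_valuation_lt_one_iff_mem (T : Subring K) (P : Ideal T)
    [P.IsPrime] :
    ∃ V : ValuationSubring K, T ≤ V.toSubring ∧ ∀ t : T, V.valuation (t : K) < 1 ↔ t ∈ P := by
  obtain ⟨V, hV, hlocal⟩ := (LocalSubring.ofPrime T P).exists_le_valuationSubring
  have hTV : T ≤ V.toSubring := (LocalSubring.le_ofPrime T P).trans hV
  refine ⟨V, hTV, fun t => ?_⟩
  let t' := algebraMap T (LocalSubring.ofPrime T P).toSubring t
  calc V.valuation (t : K) < 1 ↔ ¬ IsUnit (⟨t, hTV t.2⟩ : V) :=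
        (V.valuation_lt_one_iff ⟨t, hTV t.2⟩).symm
    _ ↔ ¬ IsUnit t' := not_congr ⟨hlocal.map_nonunit t', fun h => h.map (Subring.inclusion hV)⟩
    _ ↔ t ∈ P := by
        rw [IsLocalization.AtPrime.isUnit_to_map_iff _ P t]
        exact not_not

theorem exists_notMem_dvd_mul_pow_of_height_le_one {T : Type*} [CommRing T] [IsDomain T]
    {Q : Ideal T} [Q.IsPrime] (hQ : Q.height ≤ 1) {a c : T} (ha : a ∈ Q) (hc : c ≠ 0) :
    ∃ s ∉ Q, ∃ k : ℕ, c ∣ s * a ^ k := by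
  -- The only primes contained in `Q` are `⊥` and `Q`, so a prime that avoids both the complement
  -- of `Q` and the powers of `a` is `⊥`.
  by_contra! hndvd
  let M := Q.primeCompl ⊔ Submonoid.powers a
  have hdisj : Disjoint (Ideal.span {c} : Set T) M := by
    rw [Set.disjoint_left]
    intro z hz hzM
    obtain ⟨s, hs, _, ⟨k, rfl⟩, rfl⟩ := Submonoid.mem_sup.1 hzM
    exact hndvd s hs k (Ideal.mem_span_singleton.1 hz)
  obtain ⟨p, hp, hcp, hpM⟩ := Ideal.exists_le_prime_disjoint _ M hdisj
  rw [Set.disjoint_left] at hpM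
  have hpQ : p < Q := by
    refine lt_of_le_of_ne (fun z hz => by_contra fun hzQ => hpM hz ?_) ?_
    · exact (le_sup_left : Q.primeCompl ≤ M) hzQ
    · rintro rfl
      exact hpM ha ((le_sup_right : _ ≤ M) (Submonoid.mem_powers a))
  have hp_height : p.height < 1 :=
    (Ideal.height_le_iff (n := 1)).1 (by exact_mod_cast hQ) p hp hpQ
  have hp_bot : p = ⊥ := Ideal.height_eq_zero_iff_eq_bot.1 (Order.lt_one_iff.1 hp_height)
  rw [hp_bot, Ideal.span_singleton_le_iff_mem] at hcp
  exact hc hcp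

theorem exists_isArchimedeanOn_of_height_le_one (T : Subring K) (Q : Ideal T) [Q.IsPrime]
    (hQ : Q.height ≤ 1) :
    ∃ V : ValuationSubring K, T ≤ V.toSubring ∧ (∀ t ∈ Q, V.valuation (t : K) < 1) ∧
      IsArchimedeanOn V T := by
  obtain ⟨V, hTV, hVQ⟩ := exists_valuationSubring_valuation_lt_one_iff_mem T Q
  have hV_le_one (t : T) : V.valuation (t : K) ≤ 1 := (V.valuation_le_one_iff _).2 (hTV t.2)
  refine ⟨V, hTV, fun t ht => (hVQ t).2 ht, fun t ht hVt c hc hc0 => ?_⟩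
  lift t to T using ht
  lift c to T using hc
  obtain ⟨s, hs, k, e, he⟩ := exists_notMem_dvd_mul_pow_of_height_le_one hQ ((hVQ t).1 hVt)
    (Subtype.coe_ne_coe.1 hc0)
  have hVs : V.valuation (s : K) = 1 :=
    (hV_le_one s).eq_of_not_lt fun hlt => hs ((hVQ s).1 hlt)
  refine ⟨k, ?_⟩
  calc V.valuation (t : K) ^ k = V.valuation ((s * t ^ k : T) : K) := by simp [hVs]
    _ = V.valuation (c : K) * V.valuation (e : K) := by simp [he]
    _ ≤ V.valuation (c : K) := mul_le_of_le_one_right' (hV_le_one e)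

/-- `T'` is the affine chart, containing the center of `V`, of the blow-up of `T` along `I`. -/
theorem exists_isNoetherianRing_le_and_forall_mem_eq_mul {T : Subring K} [IsNoetherianRing T]
    {I : Ideal T} (hI : I ≠ ⊥) {V : ValuationSubring K} (hTV : T ≤ V.toSubring) :
    ∃ T' : Subring K, IsNoetherianRing T' ∧ T ≤ T' ∧ T' ≤ V.toSubring ∧
      ∃ a ∈ I, ∀ b ∈ I, ∃ q ∈ T', (b : K) = a * q := by
  obtain ⟨s, rfl⟩ := IsNoetherian.noetherian I
  have hs : s.Nonempty := Finset.nonempty_iff_ne_empty.2 (by rintro rfl; simp at hI)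
  obtain ⟨a, has, hmax⟩ := s.exists_max_image (fun b => V.valuation (b : K)) hs
  have ha0 : (a : K) ≠ 0 := by
    intro ha0
    refine hI (Submodule.span_eq_bot.2 fun b hb => Subtype.ext ?_)
    simpa [ha0] using hmax b hb
  let S := Algebra.adjoin T ((fun b : T => (b : K) / a) '' s)
  have hTS : T ≤ S.toSubring := fun t ht => S.algebraMap_mem ⟨t, ht⟩
  have hS : S.FG := Subalgebra.fg_def.2 ⟨_, s.finite_toSet.image _, rfl⟩
  refine ⟨S.toSubring, isNoetherianRing_of_fg hS, hTS,
    adjoin_toSubring_le_iff.2 ⟨fun t => hTV t.2, ?_⟩, a, Submodule.subset_span has, ?_⟩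
  · rintro _ ⟨b, hb, rfl⟩
    refine (V.valuation_le_one_iff _).1 ?_
    rw [map_div₀]
    exact div_le_one_of_le₀ (hmax b hb) zero_le
  · intro b hb
    induction hb using Submodule.span_induction with
    | mem b hb =>
      exact ⟨b / a, Algebra.subset_adjoin ⟨b, hb, rfl⟩, (mul_div_cancel₀ _ ha0).symm⟩
    | zero => exact ⟨0, zero_mem _, by simp⟩
    | add b c _ _ hb hc =>
      obtain ⟨p, hp, hbp⟩ := hb
      obtain ⟨q, hq, hcq⟩ := hc
      exact ⟨p + q, add_mem hp hq, by simp [hbp, hcq, mul_add]⟩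
    | smul t b _ hb =>
      obtain ⟨q, hq, hbq⟩ := hb
      exact ⟨t * q, mul_mem (hTS t.2) hq, by simp [hbq, mul_left_comm]⟩

theorem exists_isArchimedeanOn_of_ne_bot_of_ne_top (T : Subring K) [IsNoetherianRing T]
    (I : Ideal T) (hbot : I ≠ ⊥) (htop : I ≠ ⊤) :
    ∃ V : ValuationSubring K, T ≤ V.toSubring ∧ (∀ t ∈ I, V.valuation (t : K) < 1) ∧
      IsArchimedeanOn V T := by
  obtain ⟨V₀, hTV₀, hIV₀⟩ := Ideal.image_subset_nonunits_valuationSubring I htop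
  obtain ⟨T', hT', hTT', hT'V₀, a, haI, hdiv⟩ :=
    exists_isNoetherianRing_le_and_forall_mem_eq_mul hbot hTV₀
  let a' : T' := ⟨a, hTT' a.2⟩
  have ha' : Ideal.span {a'} ≠ ⊤ := by
    rw [Ne, Ideal.span_singleton_eq_top]
    intro hunit
    have : IsUnit (⟨a, hTV₀ a.2⟩ : V₀) := hunit.map (Subring.inclusion hT'V₀)
    exact (hIV₀ ⟨a, haI, rfl⟩).ne ((V₀.valuation_eq_one_iff _).1 this)
  obtain ⟨Q, hQ⟩ := Ideal.nonempty_minimalPrimes ha'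
  have : Q.IsPrime := hQ.isPrime
  obtain ⟨V, hT'V, hVQ, hV⟩ := exists_isArchimedeanOn_of_height_le_one T' Q
    (Ideal.height_le_one_of_isPrincipal_of_mem_minimalPrimes _ Q hQ)
  refine ⟨V, hTT'.trans hT'V, fun b hb => ?_, hV.mono hTT'⟩
  obtain ⟨q, hq, hbq⟩ := hdiv b hb
  have haQ : a' ∈ Q := hQ.1.2 (Ideal.mem_span_singleton_self a')
  rw [hbq]
  exact hVQ (a' * ⟨q, hq⟩) (Q.mul_mem_right _ haQ)

end Valuation

section Integrality

theorem exists_ideal_adjoin_inv_ne_top {A K : Type*} [CommRing A] [Field K] [Algebra A K] {x : K}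
    (hx : ¬ IsIntegral A x) :
    ∃ J : Ideal (Algebra.adjoin A {x⁻¹}), J ≠ ⊤ ∧
      ⟨x⁻¹, Algebra.self_mem_adjoin_singleton A x⁻¹⟩ ∈ J ∧
      ∀ a ∈ (⊥ : Ideal A).jacobson, algebraMap A (Algebra.adjoin A {x⁻¹}) a ∈ J := by
  have : Nontrivial A := (algebraMap A K).domain_nontrivial
  have hx0 : x ≠ 0 := by rintro rfl; exact hx isIntegral_zero
  let _ : Invertible x⁻¹ := invertibleOfNonzero (inv_ne_zero hx0)
  refine ⟨(⊥ : Ideal A).jacobson.map (algebraMap A _) ⊔ Ideal.span {⟨x⁻¹, _⟩}, fun htop => hx ?_,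
    Ideal.mem_sup_right (Ideal.mem_span_singleton_self _),
    fun a ha => Ideal.mem_sup_left (Ideal.mem_map_of_mem _ ha)⟩
  obtain ⟨p, hlead, hroot⟩ := Algebra.exists_aeval_invOf_eq_zero_of_idealMap_adjoin_sup_span_eq_top
    x⁻¹ _ (by simp [Ideal.jacobson_eq_top_iff]) htop
  rw [invOf_eq_inv, inv_inv] at hroot
  have hunit : IsUnit p.leadingCoeff := Ideal.isUnit_of_sub_one_mem_jacobson_bot _ hlead
  have hint : IsIntegral A (p.leadingCoeff • x) := isIntegral_leadingCoeff_smul p x hroot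
  simpa [smul_smul] using hint.smul (hunit.unit⁻¹ : Aˣ).1

theorem exists_isArchimedeanOn_of_le_adjoin_inv {A K : Type*} [CommRing A] [Field K] [Algebra A K]
    {x : K} (hx : ¬ IsIntegral A x) {T : Subring K} [IsNoetherianRing T]
    (hT : T ≤ (Algebra.adjoin A {x⁻¹}).toSubring) (hxT : x⁻¹ ∈ T) :
    ∃ V : ValuationSubring K, T ≤ V.toSubring ∧ V.valuation x⁻¹ < 1 ∧
      (∀ a ∈ (⊥ : Ideal A).jacobson, algebraMap A K a ∈ T → V.valuation (algebraMap A K a) < 1) ∧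
      IsArchimedeanOn V T := by
  have hx0 : x ≠ 0 := by rintro rfl; exact hx isIntegral_zero
  obtain ⟨J, hJ, hxJ, hjacJ⟩ := exists_ideal_adjoin_inv_ne_top hx
  let I : Ideal T := J.comap (Subring.inclusion hT)
  have hxI : ⟨x⁻¹, hxT⟩ ∈ I := hxJ
  have hI : I ≠ ⊥ := by
    intro hbot
    rw [hbot, Ideal.mem_bot, Subtype.ext_iff] at hxI
    exact inv_ne_zero hx0 hxI
  obtain ⟨V, hTV, hVI, hV⟩ :=
    exists_isArchimedeanOn_of_ne_bot_of_ne_top T I hI (Ideal.comap_ne_top _ hJ)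
  exact ⟨V, hTV, hVI _ hxI, fun a ha haT => hVI ⟨_, haT⟩ (hjacJ a ha), hV⟩

theorem algebraMap_mem_valuationSubring_of_isIntegral {R A K : Type*} [CommRing R] [CommRing A]
    [Field K] [Algebra R A] [Algebra A K] {V : ValuationSubring K}
    (hV : ∀ r : R, algebraMap A K (algebraMap R A r) ∈ V) {a : A} (ha : IsIntegral R a) :
    algebraMap A K a ∈ V := by
  have hint : IsIntegral V (algebraMap A K a) :=
    ha.map_of_comp_eq (((algebraMap A K).comp (algebraMap R A)).codRestrict V hV)
      (algebraMap A K) (RingHom.ext fun _ => rfl)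
  obtain ⟨v, hv⟩ := IsIntegrallyClosed.isIntegral_iff.1 hint
  exact hv ▸ v.2

theorem exists_isArchimedeanOn_of_not_isIntegral (R : Type*) {A K : Type*} [CommRing R]
    [IsNoetherianRing R] [CommRing A] [Algebra R A] [Algebra.IsIntegral R A] [Field K]
    [Algebra A K] {x : K} (hx : ¬ IsIntegral A x) {s : Set A} (hs : s.Finite) :
    ∃ V : ValuationSubring K, (∀ a : A, algebraMap A K a ∈ V) ∧ V.valuation x⁻¹ < 1 ∧
      (∀ a ∈ s, a ∈ (⊥ : Ideal A).jacobson → V.valuation (algebraMap A K a) < 1) ∧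
      IsArchimedeanOn V (insert x⁻¹ (algebraMap A K '' s)) := by
  let _ : Algebra R K := Algebra.compHom K (algebraMap R A)
  let S := Algebra.adjoin R (insert x⁻¹ (algebraMap A K '' s))
  have : IsNoetherianRing S.toSubring :=
    isNoetherianRing_of_fg (Subalgebra.fg_def.2 ⟨_, (hs.image _).insert _, rfl⟩)
  have hsS : insert x⁻¹ (algebraMap A K '' s) ⊆ S := Algebra.subset_adjoin
  have hSA : S.toSubring ≤ (Algebra.adjoin A {x⁻¹}).toSubring := by
    refine adjoin_toSubring_le_iff.2 ⟨fun r => ?_, Set.insert_subset ?_ ?_⟩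
    · exact Subalgebra.algebraMap_mem _ (algebraMap R A r)
    · exact Algebra.self_mem_adjoin_singleton A x⁻¹
    · rintro _ ⟨a, -, rfl⟩
      exact Subalgebra.algebraMap_mem _ a
  obtain ⟨V, hSV, hVx, hVjac, hV⟩ :=
    exists_isArchimedeanOn_of_le_adjoin_inv hx hSA (hsS (Set.mem_insert _ _))
  have hRV (r : R) : algebraMap A K (algebraMap R A r) ∈ V := hSV (S.algebraMap_mem r)
  exact ⟨V, fun a => algebraMap_mem_valuationSubring_of_isIntegral hRV
    (Algebra.IsIntegral.isIntegral a), hVx,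
    fun a has ha => hVjac a ha (hsS (.inr ⟨a, has, rfl⟩)), hV.mono hsS⟩

theorem isIntegral_of_forall_residueField {A B : Type*} [CommRing A] [CommRing B] [Algebra A B]
    {x : B} (h : ∀ (p : Ideal B) [p.IsPrime], IsIntegral A (algebraMap B p.ResidueField x)) :
    IsIntegral A x := by
  -- If `x` is not integral, some prime avoids the values at `x` of all monic polynomials, and `x`
  -- stays nonintegral in its residue field.
  by_contra hx
  let M : Submonoid B :=
    { carrier := {z | ∃ f : Polynomial A, f.Monic ∧ Polynomial.aeval x f = z}
      one_mem' := ⟨1, Polynomial.monic_one, map_one _⟩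
      mul_mem' := by
        rintro _ _ ⟨f, hf, rfl⟩ ⟨g, hg, rfl⟩
        exact ⟨f * g, hf.mul hg, map_mul _ _ _⟩ }
  have hdisj : Disjoint ((⊥ : Ideal B) : Set B) M := by
    rw [Set.disjoint_left]
    rintro z rfl ⟨f, hf, hfx⟩
    exact hx ⟨f, hf, hfx⟩
  obtain ⟨p, hp, -, hpM⟩ := Ideal.exists_le_prime_disjoint _ _ hdisj
  obtain ⟨f, hf, hfx⟩ := h p
  rw [← Polynomial.aeval_def, Polynomial.aeval_algebraMap_apply,
    Ideal.algebraMap_residueField_eq_zero] at hfx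
  exact Set.disjoint_left.1 hpM hfx ⟨f, hf, rfl⟩

end Integrality

section PowerBounded

variable {A B : Type*} [CommRing A] [CommRing B] [Algebra A B]

/-- The powers of `x` all lie in `t⁻ᵐ C` for a single `m`. For `C = A[ϖ^j/g]` and `t = ϖ` the
elements with this property form the ring `A^{j∘}` of power-bounded elements of the Tate ring
associated to `(C, (ϖ))`. The denominator is cleared, so that the definition does not ask for `t`
to be invertible. -/
def IsPowerBounded (C : Subalgebra A B) (t x : B) : Prop :=
  ∃ m : ℕ, ∀ n : ℕ, t ^ m * x ^ n ∈ C

theorem IsPowerBounded.map {B' : Type*} [CommRing B'] [Algebra A B'] {C : Subalgebra A B}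
    {t x : B} (h : IsPowerBounded C t x) (f : B →ₐ[A] B') :
    IsPowerBounded (C.map f) (f t) (f x) := by
  obtain ⟨m, hm⟩ := h
  exact ⟨m, fun n => ⟨t ^ m * x ^ n, hm n, by simp⟩⟩

theorem isPowerBounded_of_isIntegral {C : Subalgebra A B} {t x : B} (ht : t ∈ C)
    (hC : ∀ z : B, ∃ m : ℕ, t ^ m * z ∈ C) (hx : IsIntegral A x) : IsPowerBounded C t x := by
  obtain ⟨s, hs⟩ := hx.fg_adjoin_singleton
  choose m hm using hC
  have hspan : Submodule.span A s ≤
      C.toSubmodule.comap (LinearMap.mulLeft A (t ^ s.sup m)) := by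
    refine Submodule.span_le.2 fun z hz => ?_
    have hpow : t ^ s.sup m * z = t ^ (s.sup m - m z) * (t ^ m z * z) := by
      rw [← mul_assoc, ← pow_add, Nat.sub_add_cancel (Finset.le_sup hz)]
    change t ^ s.sup m * z ∈ C
    exact hpow ▸ mul_mem (pow_mem ht _) (hm z)
  refine ⟨s.sup m, fun n => hspan ?_⟩
  rw [hs]
  exact pow_mem (Algebra.self_mem_adjoin_singleton A x) n

theorem exists_pow_mul_mem_adjoin (ϖ g : A) [IsLocalization.Away (ϖ * g) B] {ginv : B}
    (hginv : ginv * algebraMap A B g = 1) (j : ℕ) (z : B) :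
    ∃ m : ℕ, algebraMap A B ϖ ^ m * z ∈ Algebra.adjoin A {algebraMap A B ϖ ^ j * ginv} := by
  obtain ⟨k, a, hza⟩ := IsLocalization.Away.surj (ϖ * g) z
  refine ⟨j * k + k, ?_⟩
  have hz : algebraMap A B ϖ ^ (j * k + k) * z
      = algebraMap A B a * (algebraMap A B ϖ ^ j * ginv) ^ k := by
    calc algebraMap A B ϖ ^ (j * k + k) * z
        = algebraMap A B ϖ ^ (j * k + k) * z * (ginv * algebraMap A B g) ^ k := by
          rw [hginv, one_pow, mul_one]
      _ = z * algebraMap A B (ϖ * g) ^ k * (algebraMap A B ϖ ^ j * ginv) ^ k := by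
          rw [map_mul]; ring
      _ = algebraMap A B a * (algebraMap A B ϖ ^ j * ginv) ^ k := by rw [hza]
  rw [hz]
  exact mul_mem (Subalgebra.algebraMap_mem _ a)
    (pow_mem (Algebra.self_mem_adjoin_singleton A _) k)

theorem not_isPowerBounded_of_valuation_lt_one {K : Type*} [Field K] [Algebra A K]
    {V : ValuationSubring K} {C : Subalgebra A K} (hCV : C.toSubring ≤ V.toSubring) {t x : K}
    (ht0 : t ≠ 0) (hx0 : x ≠ 0) (ht : V.valuation t < 1) {k : ℕ}
    (hk : V.valuation x⁻¹ ^ k ≤ V.valuation t) :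
    ¬ IsPowerBounded C t x := by
  rintro ⟨m, hm⟩
  have hVt : 0 < V.valuation t := by simpa [zero_lt_iff] using ht0
  let n := k * (m + 1)
  have hle : V.valuation t ^ m ≤ V.valuation t ^ (m + 1) :=
    calc V.valuation t ^ m = V.valuation (t ^ m * x ^ n) * V.valuation x⁻¹ ^ n := by
          rw [← map_pow, ← map_pow, ← map_mul, mul_assoc, ← mul_pow, mul_inv_cancel₀ hx0, one_pow,
            mul_one]
      _ ≤ V.valuation x⁻¹ ^ n :=
          mul_le_of_le_one_left' ((V.valuation_le_one_iff _).2 (hCV (hm n)))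
      _ = (V.valuation x⁻¹ ^ k) ^ (m + 1) := pow_mul _ _ _
      _ ≤ V.valuation t ^ (m + 1) := pow_le_pow_left₀ zero_le hk _
  exact (pow_lt_pow_right_of_lt_one₀ hVt ht m.lt_succ_self).not_ge hle

theorem isIntegral_of_forall_isPowerBounded_of_field (R : Type*) {K : Type*} [CommRing R]
    [IsNoetherianRing R] [Algebra R A] [Algebra.IsIntegral R A] [Field K] [Algebra A K] {ϖ g : A}
    (hϖ : ϖ ∈ (⊥ : Ideal A).jacobson) (hϖ0 : algebraMap A K ϖ ≠ 0) {ginv : K}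
    (hginv : ginv * algebraMap A K g = 1) {x : K}
    (hx : ∀ j : ℕ, 0 < j →
      IsPowerBounded (Algebra.adjoin A {algebraMap A K ϖ ^ j * ginv}) (algebraMap A K ϖ) x) :
    IsIntegral A x := by
  by_contra hint
  have hx0 : x ≠ 0 := by rintro rfl; exact hint isIntegral_zero
  obtain ⟨V, hAV, hVx, hVjac, hV⟩ :=
    exists_isArchimedeanOn_of_not_isIntegral R hint (Set.toFinite {ϖ, g})
  have hVϖ : V.valuation (algebraMap A K ϖ) < 1 := hVjac ϖ (by simp) hϖ
  obtain ⟨k, hk⟩ := hV (algebraMap A K ϖ) (by simp) hVϖ (algebraMap A K g) (by simp)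
    (right_ne_zero_of_mul_eq_one hginv)
  obtain ⟨l, hl⟩ := hV x⁻¹ (by simp) hVx (algebraMap A K ϖ) (by simp) hϖ0
  refine not_isPowerBounded_of_valuation_lt_one ?_ hϖ0 hx0 hVϖ hl (hx (k + 1) k.succ_pos)
  refine adjoin_toSubring_le_iff.2 ⟨hAV, Set.singleton_subset_iff.2 ?_⟩
  refine (V.valuation_le_one_iff _).1 ?_
  calc V.valuation (algebraMap A K ϖ ^ (k + 1) * ginv)
      = V.valuation (algebraMap A K ϖ) ^ (k + 1) * V.valuation ginv := by simp
    _ ≤ V.valuation (algebraMap A K ϖ) ^ k * V.valuation ginv :=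
        mul_le_mul_left (pow_le_pow_right_of_le_one' hVϖ.le k.le_succ) _
    _ ≤ V.valuation (algebraMap A K g) * V.valuation ginv := mul_le_mul_left hk _
    _ = 1 := by rw [← map_mul, mul_comm, hginv, map_one]

theorem isIntegral_of_forall_isPowerBounded (R : Type*) [CommRing R] [IsNoetherianRing R]
    [Algebra R A] [Algebra.IsIntegral R A] {ϖ g : A} (hϖ : ϖ ∈ (⊥ : Ideal A).jacobson)
    (hϖ_unit : IsUnit (algebraMap A B ϖ)) {ginv : B} (hginv : ginv * algebraMap A B g = 1) {x : B}
    (hx : ∀ j : ℕ, 0 < j →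
      IsPowerBounded (Algebra.adjoin A {algebraMap A B ϖ ^ j * ginv}) (algebraMap A B ϖ) x) :
    IsIntegral A x := by
  refine isIntegral_of_forall_residueField fun p _ => ?_
  let f : B →ₐ[A] p.ResidueField := IsScalarTower.toAlgHom A B p.ResidueField
  have hϖ0 : algebraMap A p.ResidueField ϖ ≠ 0 := f.commutes ϖ ▸ (hϖ_unit.map f).ne_zero
  have hfginv : f ginv * algebraMap A p.ResidueField g = 1 := by
    rw [← f.commutes, ← map_mul, hginv, map_one]
  refine isIntegral_of_forall_isPowerBounded_of_field R hϖ hϖ0 hfginv fun j hj => ?_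
  simpa [AlgHom.map_adjoin_singleton] using! (hx j hj).map f

end PowerBounded

theorem riemannExtension_zariskian_general
    (R A : Type*) [CommRing R] [IsNoetherianRing R] [CommRing A] [Algebra R A]
    [Algebra.IsIntegral R A] (ϖ g : A) (hZar : ϖ ∈ (⊥ : Ideal A).jacobson)
    (L : Type*) [CommRing L] [Algebra A L] [IsLocalization.Away (ϖ * g) L]
    (ginv : L) (hginv : ginv * algebraMap A L g = 1) :
    (integralClosure A L : Set L)
      = ⋂ j : ℕ, ⋂ (_ : 0 < j),
          {x : L | IsPowerBounded (Algebra.adjoin A {algebraMap A L ϖ ^ j * ginv})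
            (algebraMap A L ϖ) x} := by
  ext x
  simp only [Set.mem_iInter, Set.mem_ofPred_eq, SetLike.mem_coe, mem_integralClosure_iff]
  constructor
  · intro hx j _
    exact isPowerBounded_of_isIntegral (Subalgebra.algebraMap_mem _ ϖ)
      (exists_pow_mul_mem_adjoin ϖ g hginv j) hx
  · have hunit : IsUnit (algebraMap A L ϖ * algebraMap A L g) :=
      map_mul (algebraMap A L) ϖ g ▸ IsLocalization.Away.algebraMap_isUnit (ϖ * g)
    exact isIntegral_of_forall_isPowerBounded R hZar (isUnit_of_mul_isUnit_left hunit) hginv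

/-- **Riemann extension theorem I.**  Let `A` be a ring with a nonzero divisor
`ϖ` contained in the Jacobson radical of `A` (i.e. `A` is `ϖ`-adically Zariskian) and integral
over a Noetherian subring, and let `g ∈ A` be a nonzero divisor.  Then, inside `A[1/(ϖg)]`,
the integral closure of `A` equals `⋂_{j>0} A^{j∘}`, where
`A^{j∘} = {x : ∃ m, ϖ^m x^n ∈ A[ϖ^j/g] for all n}` is the ring of power-bounded elements of
the Tate ring associated to `(A[ϖ^j/g], (ϖ))`. -/
theorem riemannExtension_zariskian
    (A : Type*) [CommRing A] (ϖ g : A)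
    (hϖ : ϖ ∈ nonZeroDivisors A) (hg : g ∈ nonZeroDivisors A)
    (hZar : ϖ ∈ (⊥ : Ideal A).jacobson)
    (hNoeth : ∃ R : Subring A, IsNoetherianRing ↥R ∧ ∀ x : A, IsIntegral ↥R x)
    (L : Type*) [CommRing L] [Algebra A L] [IsLocalization.Away (ϖ * g) L]
    (ginv : L) (hginv : ginv * algebraMap A L g = 1) :
    (integralClosure A L : Set L)
      = ⋂ j : ℕ, ⋂ (_ : 0 < j),
          {x : L | ∃ m : ℕ, ∀ n : ℕ,
            (algebraMap A L ϖ) ^ m * x ^ n ∈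
              Algebra.adjoin A {(algebraMap A L ϖ) ^ j * ginv}} := by
  obtain ⟨R, hR, hRA⟩ := hNoeth
  have : Algebra.IsIntegral R A := ⟨hRA⟩
  exact riemannExtension_zariskian_general R A ϖ g hZar L ginv hginv
end

section
/- Let A₀ be a ring that is integral over a Noetherian subring, and let t ∈ A₀ be a nonzero divisor. Then an element a ∈ A₀[1/t] is integral over A₀ if and only if it is almost integral over A₀, i.e. if and only if there exists m ≥ 0 such that t^m a^n lies in the image of A₀ in A₀[1/t] for all n ≥ 0. -/
/-!
If `a` is integral over `A₀`, finitely many fractions span `A₀[a]`, and a common denominator of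
these clears the denominators of all powers of `a`.

Conversely, let `R` be Noetherian and let `x` be a nonzero divisor such that every `x * a ^ n` is
integral over `R`. The case `n = 0` shows that `R[x]` is integral over `R`, so we may replace `R`
by `R[x]` and assume `x ∈ R`; passing to `A[1/a]` we may assume that `a` has an inverse `y`. If
`y` were not a unit of the Noetherian ring `C = R[y]`, let `P` be a minimal prime over `y`. By
Krull's principal ideal theorem `P` has height at most one, so locally at `P` the nonzero divisor
`x` divides a power `y ^ N`. Multiplying by `a ^ (N + 1)` shows that `a = y⁻¹` is integral over
`C_P`, although `y ∈ P`: this contradicts lying over. Hence `a ∈ R[a⁻¹]`, which means that `a` is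
integral over `R`.
-/

open scoped nonZeroDivisors

section Denominators

variable {R S : Type*} [CommRing R] [CommRing S] [Algebra R S]

theorem exists_forall_isInteger_smul_pow_of_isIntegral (M : Submonoid R) [IsLocalization M S]
    {a : S} (ha : IsIntegral R a) :
    ∃ b ∈ M, ∀ n : ℕ, IsLocalization.IsInteger R (b • a ^ n) := by
  obtain ⟨s, hs⟩ := ha.fg_adjoin_singleton
  obtain ⟨b, hb⟩ := IsLocalization.exist_integer_multiples_of_finset M s
  have integer_of_mem_span : ∀ z ∈ Submodule.span R (s : Set S),
      IsLocalization.IsInteger R ((b : R) • z) := by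
    intro z hz
    induction hz using Submodule.span_induction with
    | mem z hz => exact hb z hz
    | zero => simpa only [smul_zero] using IsLocalization.isInteger_zero
    | add z w _ _ hz hw => simpa only [smul_add] using IsLocalization.isInteger_add hz hw
    | smul c z _ hz => simpa only [smul_comm _ c] using IsLocalization.isInteger_smul hz
  refine ⟨b, b.2, fun n ↦ integer_of_mem_span _ ?_⟩
  rw [hs]
  exact pow_mem (Algebra.self_mem_adjoin_singleton R a) n

end Denominators

section PrimeIdeals

variable {C : Type*} [CommRing C]

theorem exists_notMem_mul_pow_mem_of_forall_isPrime {I P : Ideal C} [P.IsPrime] {y : C}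
    (hy : ∀ q : Ideal C, q.IsPrime → I ≤ q → q ≤ P → y ∈ q) :
    ∃ u ∉ P, ∃ N : ℕ, u * y ^ N ∈ I := by
  by_contra! hI
  have hdisj : Disjoint (I : Set C) (P.primeCompl ⊔ Submonoid.powers y : Submonoid C) := by
    rw [Set.disjoint_right]
    intro z hz
    obtain ⟨u, hu, _, ⟨N, rfl⟩, rfl⟩ := Submonoid.mem_sup.1 hz
    exact hI u hu N
  obtain ⟨q, hq, hIq, hqdisj⟩ := Ideal.exists_le_prime_disjoint I _ hdisj
  rw [Set.disjoint_right] at hqdisj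
  have hqP : q ≤ P := fun z hzq ↦ by_contra fun hzP ↦ hqdisj (Submonoid.mem_sup_left hzP) hzq
  exact hqdisj (Submonoid.mem_sup_right (Submonoid.mem_powers y)) (hy q hq hIq hqP)

theorem eq_of_le_of_mem_minimalPrimes_span_singleton [IsNoetherianRing C] {x y : C}
    (hx : x ∈ C⁰) {P q : Ideal C} [q.IsPrime] (hP : P ∈ (Ideal.span {y}).minimalPrimes)
    (hxq : x ∈ q) (hqP : q ≤ P) : q = P := by
  refine Ideal.eq_of_le_of_height_le q hqP ?_
  calc
    P.height ≤ 1 := Ideal.height_le_one_of_isPrincipal_of_mem_minimalPrimes _ P hP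
    _ ≤ (Ideal.span {x}).height := Ideal.one_le_height_span_singleton_of_mem_nonZeroDivisors hx
    _ ≤ q.height := Ideal.height_mono ((Ideal.span_singleton_le_iff_mem q).2 hxq)

theorem exists_notMem_dvd_mul_pow_of_mem_minimalPrimes_span_singleton [IsNoetherianRing C]
    {x y : C} (hx : x ∈ C⁰) {P : Ideal C} (hP : P ∈ (Ideal.span {y}).minimalPrimes) :
    ∃ u ∉ P, ∃ N : ℕ, x ∣ u * y ^ N := by
  have := hP.isPrime
  simp only [← Ideal.mem_span_singleton]
  refine exists_notMem_mul_pow_mem_of_forall_isPrime fun q _ hxq hqP ↦ ?_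
  rw [Ideal.span_singleton_le_iff_mem] at hxq
  rw [eq_of_le_of_mem_minimalPrimes_span_singleton hx hP hxq hqP]
  exact hP.le (Ideal.mem_span_singleton_self y)

theorem mem_of_algebraMap_eq_mul_of_isIntegral {S : Type*} [CommRing S] [Algebra C S]
    [FaithfulSMul C S] {P : Ideal C} [P.IsPrime] {u y : C} {z : S} (hz : IsIntegral C z)
    (hy : y ∈ P) (hu : algebraMap C S u = z * algebraMap C S y) : u ∈ P := by
  let z' : integralClosure C S := ⟨z, hz⟩
  have hu' : algebraMap C (integralClosure C S) u = z' * algebraMap C _ y := Subtype.ext hu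
  have := FaithfulSMul.tower_bot C (integralClosure C S) S
  have hinj := FaithfulSMul.algebraMap_injective C (integralClosure C S)
  obtain ⟨Q, -, -, rfl⟩ := Ideal.exists_ideal_over_prime_of_isIntegral P ⊥
    (Ideal.comap_bot_le_of_injective _ hinj)
  rw [Ideal.mem_comap, hu']
  exact Q.mul_mem_left _ hy

end PrimeIdeals

section Integrality

theorem isUnit_of_forall_isIntegral_smul_pow {C S : Type*} [CommRing C] [IsNoetherianRing C]
    [CommRing S] [Algebra C S] [FaithfulSMul C S] {x y : C} {a : S} (hx : x ∈ C⁰)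
    (hya : algebraMap C S y * a = 1) (h : ∀ n : ℕ, IsIntegral C (x • a ^ n)) : IsUnit y := by
  by_contra hy
  obtain ⟨P, hP⟩ := Ideal.nonempty_minimalPrimes (Ideal.span_singleton_ne_top hy)
  have := hP.isPrime
  obtain ⟨u, hu, N, c, hc⟩ := exists_notMem_dvd_mul_pow_of_mem_minimalPrimes_span_singleton hx hP
  have hu_eq : algebraMap C S u = (c • x • a ^ (N + 1)) * algebraMap C S y := by
    have hcS : algebraMap C S u * algebraMap C S y ^ N = algebraMap C S x * algebraMap C S c := by
      simpa only [map_mul, map_pow] using congrArg (algebraMap C S) hc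
    calc
      algebraMap C S u = algebraMap C S u * (algebraMap C S y * a) ^ (N + 1) := by simp [hya]
      _ = algebraMap C S u * algebraMap C S y ^ N * a ^ (N + 1) * algebraMap C S y := by ring
      _ = (c • x • a ^ (N + 1)) * algebraMap C S y := by
        rw [hcS, Algebra.smul_def, Algebra.smul_def]; ring
  exact hu (mem_of_algebraMap_eq_mul_of_isIntegral ((h (N + 1)).smul c)
    (hP.le (Ideal.mem_span_singleton_self y)) hu_eq)

variable {R S : Type*} [CommRing R] [IsNoetherianRing R] [CommRing S] [Algebra R S]

theorem isNoetherianRing_adjoin_of_finite {s : Set S} (hs : s.Finite) :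
    IsNoetherianRing (Algebra.adjoin R s) :=
  isNoetherianRing_of_fg (Subalgebra.fg_def.2 ⟨s, hs, rfl⟩)

theorem isIntegral_of_forall_isIntegral_smul_pow_of_mul_eq_one {x : R} {y a : S}
    (hx : algebraMap R S x ∈ S⁰) (hya : y * a = 1) (h : ∀ n : ℕ, IsIntegral R (x • a ^ n)) :
    IsIntegral R a := by
  let C := Algebra.adjoin R {y}
  have : IsNoetherianRing C := isNoetherianRing_adjoin_of_finite (Set.finite_singleton y)
  let y' : C := ⟨y, Algebra.self_mem_adjoin_singleton R y⟩
  have hxC : algebraMap R C x ∈ C⁰ :=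
    mem_nonZeroDivisors_of_injective (f := algebraMap C S) Subtype.val_injective hx
  have hy' : IsUnit y' := isUnit_of_forall_isIntegral_smul_pow hxC hya fun n ↦ by
    rw [algebraMap_smul]
    exact (h n).tower_top
  obtain ⟨z, hz⟩ := hy'.exists_right_inv
  have haz : a = algebraMap C S z :=
    left_inv_eq_right_inv ((mul_comm a y).trans hya) (congrArg Subtype.val hz)
  exact isIntegral_of_isIntegral_adjoin_of_mul_eq_one a y hya (haz ▸ isIntegral_algebraMap)

theorem isIntegral_of_forall_isIntegral_smul_pow {x : R} {a : S}
    (hx : algebraMap R S x ∈ S⁰) (h : ∀ n : ℕ, IsIntegral R (x • a ^ n)) : IsIntegral R a := by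
  let L := Localization.Away a
  refine IsLocalization.Away.isIntegral_of_isIntegral_map (Sₘ := L) a ?_
  have hxL : algebraMap R L x ∈ L⁰ := by
    rw [IsScalarTower.algebraMap_apply R S L]
    exact IsLocalization.nonZeroDivisors_le_comap (Submonoid.powers a) L hx
  refine isIntegral_of_forall_isIntegral_smul_pow_of_mul_eq_one hxL
    ((mul_comm _ _).trans (IsLocalization.Away.mul_invSelf a)) fun n ↦ ?_
  simpa only [map_smul, map_pow, IsScalarTower.coe_toAlgHom'] using
    (h n).map (IsScalarTower.toAlgHom R S L)

theorem isIntegral_of_forall_isIntegral_mul_pow {x a : S}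
    (hx : x ∈ S⁰) (h : ∀ n : ℕ, IsIntegral R (x * a ^ n)) : IsIntegral R a := by
  have hx_int : IsIntegral R x := by simpa only [pow_zero, mul_one] using h 0
  let C := Algebra.adjoin R {x}
  have : IsNoetherianRing C := isNoetherianRing_adjoin_of_finite (Set.finite_singleton x)
  have : Algebra.IsIntegral R C := .adjoin (by simpa using hx_int)
  let x' : C := ⟨x, Algebra.self_mem_adjoin_singleton R x⟩
  exact isIntegral_trans (A := C) a
    (isIntegral_of_forall_isIntegral_smul_pow (x := x') hx fun n ↦ (h n).tower_top)

end Integrality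

theorem integral_iff_almost_integral_of_isIntegral_noetherian_general
    {R A₀ A : Type*} [CommRing R] [IsNoetherianRing R] [CommRing A₀] [Algebra R A₀]
    [Algebra.IsIntegral R A₀] [CommRing A] [Algebra A₀ A] [Algebra R A] [IsScalarTower R A₀ A]
    (t : A₀) [IsLocalization.Away t A] (a : A) :
    IsIntegral A₀ a ↔
      ∃ m : ℕ, ∀ n : ℕ, (algebraMap A₀ A t) ^ m * a ^ n ∈ (algebraMap A₀ A).range := by
  constructor
  · intro ha
    obtain ⟨_, ⟨m, rfl⟩, hm⟩ :=
      exists_forall_isInteger_smul_pow_of_isIntegral (Submonoid.powers t) ha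
    exact ⟨m, fun n ↦ by
      simpa only [IsLocalization.IsInteger, RingHom.mem_rangeS, RingHom.mem_range,
        Algebra.smul_def, map_pow] using hm n⟩
  · rintro ⟨m, hm⟩
    have ht : algebraMap A₀ A t ^ m ∈ A⁰ :=
      ((IsLocalization.Away.algebraMap_isUnit t).pow m).mem_nonZeroDivisors
    refine (isIntegral_of_forall_isIntegral_mul_pow (R := R) ht fun n ↦ ?_).tower_top
    obtain ⟨c, hc⟩ := hm n
    exact hc ▸ (Algebra.IsIntegral.isIntegral c).algebraMap

/-- Let `A₀` be a ring that is integral over a Noetherian subring, and let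
`t ∈ A₀` be a nonzero divisor.  Then an element `a ∈ A₀[1/t]` is integral over `A₀` if and only
if it is almost integral over `A₀`, i.e. iff there exists `m ≥ 0` such that `t^m * a^n` lies in
the image of `A₀` in `A₀[1/t]` for all `n ≥ 0`. -/
theorem integral_iff_almost_integral_of_isIntegral_noetherian
    (A₀ : Type*) [CommRing A₀]
    (hNoeth : ∃ R : Subring A₀, IsNoetherianRing ↥R ∧ ∀ x : A₀, IsIntegral ↥R x)
    (t : A₀) (ht : t ∈ nonZeroDivisors A₀)
    (A : Type*) [CommRing A] [Algebra A₀ A] [IsLocalization.Away t A]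
    (a : A) :
    IsIntegral A₀ a ↔
      ∃ m : ℕ, ∀ n : ℕ, (algebraMap A₀ A t) ^ m * a ^ n ∈ (algebraMap A₀ A).range := by
  obtain ⟨R, _, hR⟩ := hNoeth
  have : Algebra.IsIntegral R A₀ := ⟨hR⟩
  exact integral_iff_almost_integral_of_isIntegral_noetherian_general (R := R) t a
end

section
/- Let D be a ring containing a Noetherian subring R such that D is integral over R, let C be the localization of D at a multiplicative set consisting of nonzero divisors, and let S ⊆ D be a (possibly empty) subset consisting of nonzero divisors. Then an element x ∈ C lies in the integral closure of D in C if and only if v(x) ≤ 1 for every rank-≤1 semivaluation v on C satisfying v(d) ≤ 1 for all d ∈ D and v(g) ≠ 0 for all g ∈ S. -/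
/-! Nonmembership in the integral closure survives in the residue field `K` of some minimal prime
of `C`, where nonzero divisors do not vanish. If `A ⊆ K` is a Noetherian ring over which `K` is
algebraic and `x ∈ K` is not integral over `A`, then `x⁻¹` is a nonunit of `A[x⁻¹]`, and by Krull's
principal ideal theorem it lies in a prime `q` of height one. Inverting `x` in the localization at
`q` gives a field, so a valuation ring containing this localization, and maximal among those
without `x`, is a maximal proper subring of `K`. Hence it has rank one. -/

open scoped NNReal nonZeroDivisors Polynomial

section Integrality

variable {R C : Type*} [CommRing R] [CommRing C] [Algebra R C]

theorem valuation_le_one_of_isIntegral {Γ₀ : Type*} [LinearOrderedCommGroupWithZero Γ₀]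
    (v : Valuation C Γ₀) (hv : ∀ r, v (algebraMap R C r) ≤ 1) {x : C} (hx : IsIntegral R x) :
    v x ≤ 1 := by
  refine (Valuation.integer.integers v).mem_of_integral ?_
  obtain ⟨p, hp, hpx⟩ := hx
  refine ⟨p.map ((algebraMap R C).codRestrict v.integer hv), hp.map _, ?_⟩
  rw [Polynomial.eval₂_map]
  exact hpx

theorem exists_minimalPrimes_forall_monic_aeval_notMem {x : C} (hx : ¬ IsIntegral R x) :
    ∃ P ∈ minimalPrimes C, ∀ p : R[X], p.Monic → Polynomial.aeval x p ∉ P := by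
  let monicValues : Submonoid C :=
    { carrier := {c | ∃ p : R[X], p.Monic ∧ Polynomial.aeval x p = c}
      one_mem' := ⟨1, Polynomial.monic_one, map_one _⟩
      mul_mem' := by
        rintro _ _ ⟨p, hp, rfl⟩ ⟨q, hq, rfl⟩
        exact ⟨p * q, hp.mul hq, map_mul _ _ _⟩ }
  have bot_disjoint : Disjoint ((⊥ : Ideal C) : Set C) monicValues := by
    rw [Set.disjoint_left]
    rintro z hz ⟨p, hp, rfl⟩
    exact hx ⟨p, hp, hz⟩
  obtain ⟨Q, hQ, -, hdisj⟩ := Ideal.exists_le_prime_disjoint ⊥ monicValues bot_disjoint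
  obtain ⟨P, hP, hPQ⟩ := Ideal.exists_minimalPrimes_le (bot_le (a := Q))
  exact ⟨P, hP, fun p hp hpP ↦ Set.disjoint_left.mp hdisj (hPQ hpP) ⟨p, hp, rfl⟩⟩

theorem exists_minimalPrimes_not_isIntegral_residueField {x : C} (hx : ¬ IsIntegral R x) :
    ∃ (P : Ideal C) (_ : P.IsPrime), P ∈ minimalPrimes C ∧
      ¬ IsIntegral R (algebraMap C P.ResidueField x) := by
  obtain ⟨P, hP, hnotMem⟩ := exists_minimalPrimes_forall_monic_aeval_notMem hx
  have : P.IsPrime := hP.1.1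
  refine ⟨P, this, hP, fun ⟨p, hp, hpx⟩ ↦ hnotMem p hp ?_⟩
  rwa [← Ideal.algebraMap_residueField_eq_zero, ← Polynomial.aeval_algebraMap_apply]

end Integrality

theorem isAlgebraic_bot_residueField (R : Type*) {D C : Type*} [CommRing R] [CommRing D]
    [Algebra R D] [Algebra.IsIntegral R D] [CommRing C] [Algebra D C] [Algebra R C]
    [IsScalarTower R D C] (M : Submonoid D) [IsLocalization M C] (P : Ideal C) [P.IsPrime] :
    Algebra.IsAlgebraic (⊥ : Subalgebra R P.ResidueField) P.ResidueField := by
  let κ := P.ResidueField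
  have of_base (d : D) : IsAlgebraic (⊥ : Subalgebra R κ) (algebraMap C κ (algebraMap D C d)) :=
    (((Algebra.IsIntegral.isIntegral (R := R) d).algebraMap (B := C)).algebraMap
      (B := κ)).tower_top.isAlgebraic
  have of_localization (c : C) : IsAlgebraic (⊥ : Subalgebra R κ) (algebraMap C κ c) := by
    obtain ⟨⟨d, m⟩, hc⟩ := IsLocalization.surj M c
    have hm : algebraMap C κ (algebraMap D C m) ≠ 0 :=
      ((IsLocalization.map_units C m).map (algebraMap C κ)).ne_zero
    have : algebraMap C κ c =
        algebraMap C κ (algebraMap D C d) * (algebraMap C κ (algebraMap D C m))⁻¹ := by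
      rw [eq_mul_inv_iff_mul_eq₀ hm, ← map_mul, hc]
    exact this ▸ (of_base d).mul (of_base m).inv
  refine ⟨fun z ↦ ?_⟩
  obtain ⟨a, b, -, rfl⟩ := IsFractionRing.div_surjective (A := C ⧸ P) z
  obtain ⟨a, rfl⟩ := Ideal.Quotient.mk_surjective a
  obtain ⟨b, rfl⟩ := Ideal.Quotient.mk_surjective b
  rw [div_eq_mul_inv]
  exact (of_localization a).mul (of_localization b).inv

theorem exists_dvd_mul_pow_of_height_le_one {A : Type*} [CommRing A] [IsDomain A] {q : Ideal A}
    [q.IsPrime] (hq : q.height ≤ 1) {y a : A} (hy : y ∈ q) (ha : a ≠ 0) :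
    ∃ n : ℕ, ∃ s ∉ q, a ∣ s * y ^ n := by
  by_contra! hdvd
  have span_disjoint : Disjoint (Ideal.span {a} : Set A)
      (q.primeCompl ⊔ Submonoid.powers y : Submonoid A) := by
    rw [Set.disjoint_left]
    intro z hz hz'
    obtain ⟨s, hs, _, ⟨n, rfl⟩, rfl⟩ := Submonoid.mem_sup.mp hz'
    exact hdvd n s hs (Ideal.mem_span_singleton.mp hz)
  obtain ⟨p, hp, hap, hdisj⟩ := Ideal.exists_le_prime_disjoint _ _ span_disjoint
  rw [Set.disjoint_left] at hdisj
  have hpq : p < q := by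
    refine lt_of_le_of_ne (fun z hz ↦ ?_) ?_
    · by_contra hzq
      exact hdisj hz (SetLike.le_def.mp le_sup_left hzq)
    · rintro rfl
      exact hdisj hy (SetLike.le_def.mp le_sup_right (Submonoid.mem_powers y))
  have : q.FiniteHeight := Ideal.finiteHeight_iff_lt.mpr (.inr (hq.trans_lt (by simp)))
  have hp_height : p.height < 1 :=
    (Ideal.height_strict_mono_of_isPrime_of_isPrime hpq).trans_le hq
  rw [Order.lt_one_iff, Ideal.height_eq_zero_iff_eq_bot] at hp_height
  exact ha (by simpa [hp_height] using hap)

section Field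

variable {K : Type*} [Field K]

theorem valuation_le_pow_of_mem_adjoin (V : ValuationSubring K) {x z : K}
    (hx : 1 ≤ V.valuation x) (hz : z ∈ Algebra.adjoin V {x}) :
    ∃ n : ℕ, V.valuation z ≤ V.valuation x ^ n := by
  induction hz using Algebra.adjoin_induction with
  | mem z hz => exact ⟨1, by rw [Set.mem_singleton_iff.mp hz, pow_one]⟩
  | algebraMap r => exact ⟨0, by simp⟩
  | add z w _ _ hz hw =>
    obtain ⟨m, hm⟩ := hz
    obtain ⟨n, hn⟩ := hw
    refine ⟨max m n, V.valuation.map_add_le ?_ ?_⟩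
    · exact hm.trans (pow_le_pow_right₀ hx (le_max_left m n))
    · exact hn.trans (pow_le_pow_right₀ hx (le_max_right m n))
  | mul z w _ _ hz hw =>
    obtain ⟨m, hm⟩ := hz
    obtain ⟨n, hn⟩ := hw
    exact ⟨m + n, by rw [map_mul, pow_add]; exact mul_le_mul' hm hn⟩

theorem mulArchimedean_valueGroup_of_isCoatom {V : ValuationSubring K} (hV : IsCoatom V) :
    MulArchimedean V.ValueGroup := by
  refine ⟨fun b a ha ↦ ?_⟩
  obtain ⟨b, rfl⟩ := V.valuation_surjective b
  obtain ⟨a, rfl⟩ := V.valuation_surjective a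
  let Va : ValuationSubring K := V.ofLE (Algebra.adjoin V {a}).toSubring
    fun z hz ↦ (Algebra.adjoin V {a}).algebraMap_mem ⟨z, hz⟩
  have a_notMem : a ∉ V := by rwa [← V.valuation_le_one_iff, not_le]
  have a_mem : a ∈ Va := Algebra.self_mem_adjoin_singleton V a
  have lt_Va : V < Va := lt_of_le_of_ne
    (fun z hz ↦ (Algebra.adjoin V {a}).algebraMap_mem ⟨z, hz⟩) fun h ↦ a_notMem (h ▸ a_mem)
  have b_mem : b ∈ Va := hV.2 Va lt_Va ▸ ValuationSubring.mem_top b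
  exact valuation_le_pow_of_mem_adjoin V ha.le b_mem

theorem exists_nnreal_valuation_valuationSubring_eq_of_isCoatom {V : ValuationSubring K}
    (hV : IsCoatom V) : ∃ v : Valuation K ℝ≥0, v.valuationSubring = V := by
  have : MulArchimedean V.ValueGroup := mulArchimedean_valueGroup_of_isCoatom hV
  have : V.valuation.IsNontrivial := by
    by_contra h
    exact hV.1 (V.eq_top_iff.mpr h)
  have : MulArchimedean (MonoidWithZeroHom.ValueGroup₀ (.ofClass V.valuation)) :=
    MulArchimedean.comap MonoidWithZeroHom.ValueGroup₀.embedding.toMonoidHom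
      MonoidWithZeroHom.ValueGroup₀.embedding_strictMono
  obtain ⟨f⟩ := V.valuation.nonempty_rankOne_iff_mulArchimedean.mpr this
  refine ⟨V.valuation.restrict.map f.hom' f.strictMono'.monotone, ?_⟩
  ext z
  rw [Valuation.mem_valuationSubring_iff, Valuation.map_apply, ← map_one f.hom',
    f.strictMono'.le_iff_le, Valuation.restrict_le_one_iff, V.valuation_le_one_iff]

theorem exists_maximal_notMem_valuationSubring {V : ValuationSubring K} {x : K} (hx : x ∉ V) :
    ∃ W, V ≤ W ∧ Maximal (fun W : ValuationSubring K ↦ x ∉ W) W := by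
  refine zorn_le_nonempty₀ {W : ValuationSubring K | x ∉ W} (fun c hc hchain U hU ↦ ?_) V hx
  have : Nonempty c := ⟨U, hU⟩
  have directed : Directed (· ≤ ·) fun W : c ↦ W.1.toSubring := hchain.directed
  refine ⟨U.ofLE (⨆ W : c, W.1.toSubring) (le_iSup (fun W : c ↦ W.1.toSubring) ⟨U, hU⟩), ?_, ?_⟩
  · intro hmem
    obtain ⟨W, hW⟩ := (Subring.mem_iSup_of_directed directed).mp hmem
    exact hc W.2 hW
  · exact fun W hW ↦ le_iSup (fun W : c ↦ W.1.toSubring) ⟨W, hW⟩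

theorem exists_isCoatom_valuationSubring {V : ValuationSubring K} {x : K} (hx : x ∉ V)
    (hV : ∀ W, V ≤ W → x ∈ W → W = ⊤) : ∃ W, V ≤ W ∧ IsCoatom W ∧ x ∉ W := by
  obtain ⟨W, hVW, hW⟩ := exists_maximal_notMem_valuationSubring hx
  refine ⟨W, hVW, ⟨fun h ↦ hW.prop (h ▸ ValuationSubring.mem_top x), fun U hWU ↦ ?_⟩, hW.prop⟩
  exact hV U (hVW.trans hWU.le) (not_not.mp (hW.not_prop_of_gt hWU))

theorem valuationSubring_eq_top_of_forall_inv_mem {R : Type*} [CommRing R] [Algebra R K]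
    [FaithfulSMul R K] [Algebra.IsAlgebraic R K] {W : ValuationSubring K}
    (hR : ∀ r, algebraMap R K r ∈ W) (hinv : ∀ r, (algebraMap R K r)⁻¹ ∈ W) : W = ⊤ := by
  refine top_unique fun z _ ↦ ?_
  obtain ⟨r, hr, hrz⟩ := (Algebra.IsAlgebraic.isAlgebraic (R := R) z).exists_integral_multiple
  have hr' : algebraMap R K r ≠ 0 := by simpa using hr
  have hmem : r • z ∈ W := (W.valuation_le_one_iff _).mp <|
    valuation_le_one_of_isIntegral W.valuation
      (fun r ↦ (W.valuation_le_one_iff _).mpr (hR r)) hrz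
  have hz : z = (algebraMap R K r)⁻¹ * (r • z) := by
    rw [Algebra.smul_def, inv_mul_cancel_left₀ hr']
  exact hz ▸ W.mul_mem _ _ (hinv r) hmem

section OfPrime

variable {A : Subring K} {q : Ideal A} [q.IsPrime]

theorem inv_mem_ofPrime {s : A} (hs : s ∉ q) :
    (s : K)⁻¹ ∈ (LocalSubring.ofPrime A q).toSubring := by
  obtain ⟨t, ht⟩ := (IsLocalization.map_units (M := q.primeCompl)
    (LocalSubring.ofPrime A q).toSubring ⟨s, hs⟩).exists_right_inv
  have : (s : K) * t = 1 := congr_arg Subtype.val ht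
  exact inv_eq_of_mul_eq_one_right this ▸ t.2

theorem inv_mem_of_ofPrime_le (hq : q.height ≤ 1) {y : A} (hy : y ∈ q) (hy₀ : y ≠ 0)
    {W : ValuationSubring K} (hW : (LocalSubring.ofPrime A q).toSubring ≤ W.toSubring)
    (hyW : (y : K)⁻¹ ∈ W) (a : A) : (a : K)⁻¹ ∈ W := by
  obtain rfl | ha := eq_or_ne a 0
  · simp
  obtain ⟨n, s, hs, c, hc⟩ := exists_dvd_mul_pow_of_height_le_one hq hy ha
  have hy₀' : (y : K) ≠ 0 := by simpa using hy₀
  have ha' : (a : K) ≠ 0 := by simpa using ha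
  have hs' : (s : K) ≠ 0 := by
    intro h
    exact hs (by simp [Subtype.ext (a2 := (0 : A)) h])
  have hc' : (s : K) * y ^ n = a * c := congr_arg Subtype.val hc
  have hinv : (a : K)⁻¹ = c * (s : K)⁻¹ * (y : K)⁻¹ ^ n := by
    rw [inv_pow]
    field_simp
    exact hc'
  rw [hinv]
  exact W.mul_mem _ _ (W.mul_mem _ _ (hW (LocalSubring.le_ofPrime A q c.2))
    (hW (inv_mem_ofPrime hs))) (pow_mem hyW n)

theorem exists_isCoatom_valuationSubring_of_height_le_one [Algebra.IsAlgebraic A K]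
    (hq : q.height ≤ 1) {y : A} (hy : y ∈ q) (hy₀ : y ≠ 0) :
    ∃ V : ValuationSubring K, IsCoatom V ∧ A ≤ V.toSubring ∧ (y : K)⁻¹ ∉ V := by
  let B := LocalSubring.ofPrime A q
  obtain ⟨V, hBV, hV⟩ := Ideal.image_subset_nonunits_valuationSubring
    (IsLocalRing.maximalIdeal B.toSubring) Ideal.IsPrime.ne_top'
  have y_mem : algebraMap A B.toSubring y ∈ IsLocalRing.maximalIdeal B.toSubring :=
    (IsLocalization.AtPrime.to_map_mem_maximal_iff B.toSubring q y).mpr hy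
  have hyV : (y : K)⁻¹ ∉ V := by
    have : (y : K) ∈ V.nonunits := hV ⟨_, y_mem, rfl⟩
    exact (V.mem_nonunits_iff_or.mp this).resolve_left (by simpa using hy₀)
  have eq_top (W : ValuationSubring K) (hVW : V ≤ W) (hyW : (y : K)⁻¹ ∈ W) : W = ⊤ := by
    have hBW : B.toSubring ≤ W.toSubring := hBV.trans hVW
    exact valuationSubring_eq_top_of_forall_inv_mem (R := A)
      (fun a ↦ hBW (LocalSubring.le_ofPrime A q a.2)) (inv_mem_of_ofPrime_le hq hy hy₀ hBW hyW)
  obtain ⟨W, hVW, hW, hyW⟩ := exists_isCoatom_valuationSubring hyV eq_top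
  exact ⟨W, hW, fun a ha ↦ hVW (hBV (LocalSubring.le_ofPrime A q ha)), hyW⟩

end OfPrime

variable {R : Type*} [CommRing R] [Algebra R K]

theorem isIntegral_of_span_inv_eq_top {x : K} (hx₀ : x ≠ 0)
    (h : Ideal.span {(⟨x⁻¹, Algebra.self_mem_adjoin_singleton R x⁻¹⟩ :
      Algebra.adjoin R {x⁻¹})} = ⊤) : IsIntegral R x := by
  nontriviality R
  let := invertibleOfNonzero (inv_ne_zero hx₀)
  obtain ⟨p, hp, hpx⟩ :=
    Algebra.exists_aeval_invOf_eq_zero_of_idealMap_adjoin_sup_span_eq_top x⁻¹ (⊥ : Ideal R)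
      bot_ne_top (top_unique (h.ge.trans le_sup_right))
  exact ⟨p, by simpa [Polynomial.Monic, sub_eq_zero] using hp,
    by simpa [Polynomial.aeval_def] using hpx⟩

variable [IsNoetherianRing R]

theorem exists_isCoatom_valuationSubring_of_not_isIntegral [FaithfulSMul R K]
    [Algebra.IsAlgebraic R K] {x : K} (hx : ¬ IsIntegral R x) :
    ∃ V : ValuationSubring K, IsCoatom V ∧ (∀ r, algebraMap R K r ∈ V) ∧ x ∉ V := by
  have hx₀ : x ≠ 0 := by
    rintro rfl
    exact hx isIntegral_zero
  let B := Algebra.adjoin R {x⁻¹}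
  let A : Subring K := B.toSubring
  have : IsNoetherianRing A := isNoetherianRing_of_fg (S := B) ⟨{x⁻¹}, by simp [B]⟩
  have : Algebra.IsAlgebraic A K := Algebra.IsAlgebraic.extendScalars (S := B)
    (.of_comp (f := B.val) (FaithfulSMul.algebraMap_injective R K))
  let y : A := ⟨x⁻¹, Algebra.self_mem_adjoin_singleton R x⁻¹⟩
  have hy₀ : y ≠ 0 := fun h ↦ inv_ne_zero hx₀ (congr_arg Subtype.val h)
  obtain ⟨q, hq⟩ := Ideal.nonempty_minimalPrimes fun h : Ideal.span {y} = ⊤ ↦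
    hx (isIntegral_of_span_inv_eq_top hx₀ h)
  have : q.IsPrime := hq.1.1
  obtain ⟨V, hV, hAV, hyV⟩ := exists_isCoatom_valuationSubring_of_height_le_one
    (Ideal.height_le_one_of_isPrincipal_of_mem_minimalPrimes _ q hq)
    (hq.1.2 (Ideal.mem_span_singleton_self y)) hy₀
  exact ⟨V, hV, fun r ↦ hAV (B.algebraMap_mem r), by simpa [y] using hyV⟩

theorem exists_nnreal_valuation_one_lt_of_not_isIntegral
    [Algebra.IsAlgebraic (⊥ : Subalgebra R K) K] {x : K} (hx : ¬ IsIntegral R x) :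
    ∃ v : Valuation K ℝ≥0, (∀ r, v (algebraMap R K r) ≤ 1) ∧ 1 < v x := by
  have : IsNoetherianRing (⊥ : Subalgebra R K) := isNoetherianRing_of_fg Subalgebra.fg_bot
  have hx_bot : ¬ IsIntegral (⊥ : Subalgebra R K) x := fun h ↦ hx (isIntegral_trans x h)
  obtain ⟨V, hV, hRV, hxV⟩ := exists_isCoatom_valuationSubring_of_not_isIntegral hx_bot
  obtain ⟨v, rfl⟩ := exists_nnreal_valuation_valuationSubring_eq_of_isCoatom hV
  exact ⟨v, fun r ↦ hRV (algebraMap R _ r), not_le.mp hxV⟩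

end Field

theorem exists_nnreal_valuation_nonZeroDivisors_one_lt_of_not_isIntegral {R D C : Type*}
    [CommRing R] [IsNoetherianRing R] [CommRing D] [Algebra R D] [Algebra.IsIntegral R D]
    [CommRing C] [Algebra D C] [Algebra R C] [IsScalarTower R D C] (M : Submonoid D)
    [IsLocalization M C] {x : C} (hx : ¬ IsIntegral R x) :
    ∃ v : Valuation C ℝ≥0,
      (∀ r, v (algebraMap R C r) ≤ 1) ∧ (∀ g ∈ C⁰, v g ≠ 0) ∧ 1 < v x := by
  obtain ⟨P, _, hP, hxP⟩ := exists_minimalPrimes_not_isIntegral_residueField hx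
  have := isAlgebraic_bot_residueField R M P
  obtain ⟨v, hRv, hxv⟩ := exists_nnreal_valuation_one_lt_of_not_isIntegral hxP
  refine ⟨v.comap (algebraMap C P.ResidueField), fun r ↦ ?_, fun g hg hvg ↦ ?_, hxv⟩
  · simpa [← IsScalarTower.algebraMap_apply] using hRv r
  · rw [Valuation.comap_apply, map_eq_zero, Ideal.algebraMap_residueField_eq_zero] at hvg
    exact notMem_nonZeroDivisors_of_mem_mem_minimalPrimes hvg hP hg

theorem mem_integralClosure_iff_le_one_of_semivaluations_general
    (R : Type*) [CommRing R] [IsNoetherianRing R]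
    {D : Type*} [CommRing D] [Algebra R D] [Algebra.IsIntegral R D] (M : Submonoid D)
    {C : Type*} [CommRing C] [Algebra D C] [IsLocalization M C] {S : Set C}
    (hS : S ⊆ C⁰) {x : C} :
    x ∈ integralClosure D C ↔
      ∀ v : Valuation C ℝ≥0,
        (∀ d : D, v (algebraMap D C d) ≤ 1) → (∀ g ∈ S, v g ≠ 0) → v x ≤ 1 := by
  refine ⟨fun hx v hv _ ↦ valuation_le_one_of_isIntegral v hv hx, fun h ↦ ?_⟩
  let := Algebra.compHom C (algebraMap R D)
  have : IsScalarTower R D C := .of_algebraMap_eq fun _ ↦ rfl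
  by_contra hx
  have hxR : ¬ IsIntegral R x := fun hint ↦ hx hint.tower_top
  obtain ⟨v, hRv, hSv, hxv⟩ :=
    exists_nnreal_valuation_nonZeroDivisors_one_lt_of_not_isIntegral M hxR
  have hDv (d : D) : v (algebraMap D C d) ≤ 1 :=
    valuation_le_one_of_isIntegral v hRv (Algebra.IsIntegral.isIntegral (R := R) d).algebraMap
  exact hxv.not_ge (h v hDv fun g hg ↦ hSv g (hS hg))

/-- Let `D` be a ring containing a Noetherian subring `R` over which it is
integral, let `C` be the localization of `D` at a multiplicative set of nonzero divisors, and
let `S ⊆ D` be a (possibly empty) set of nonzero divisors.  Then `x ∈ C` lies in the integral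
closure of `D` in `C` iff `v x ≤ 1` for every rank-`≤1` semivaluation `v` on `C` (a valuation
with values in `ℝ≥0`) with `v d ≤ 1` for all `d ∈ D` and `v g ≠ 0` for all `g ∈ S`. -/
theorem mem_integralClosure_iff_le_one_of_semivaluations
    (D : Type*) [CommRing D]
    (hNoeth : ∃ R : Subring D, IsNoetherianRing ↥R ∧ ∀ x : D, IsIntegral ↥R x)
    (M : Submonoid D) (hM : M ≤ nonZeroDivisors D)
    (C : Type*) [CommRing C] [Algebra D C] [IsLocalization M C]
    (S : Set D) (hS : ∀ g ∈ S, g ∈ nonZeroDivisors D)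
    (x : C) :
    x ∈ integralClosure D C ↔
      ∀ v : Valuation C NNReal,
        (∀ d : D, v (algebraMap D C d) ≤ 1) →
        (∀ g ∈ S, v (algebraMap D C g) ≠ 0) →
        v x ≤ 1 := by
  obtain ⟨R, _, hR⟩ := hNoeth
  have : Algebra.IsIntegral R D := ⟨hR⟩
  have hSC : algebraMap D C '' S ⊆ C⁰ :=
    (Set.image_mono hS).trans (IsLocalization.map_nonZeroDivisors_le M C)
  simpa only [Set.forall_mem_image] using
    mem_integralClosure_iff_le_one_of_semivaluations_general R M hSC
end

section
/- Let A be a ring with a nonzero divisor t ∈ A such that A is completely integrally closed in A[1/t], and fix a prime p. Suppose A admits a compatible system of p-power roots t^{1/p^n} ∈ A of t. Then the subring t^{−1/p^∞}A := {b ∈ A[1/t] : t^{1/p^n}·b ∈ A for all n > 0} of A[1/t] is equal to (the image of) A; in particular t^{−1/p^∞}A is completely integrally closed in A[1/t]. -/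
/-- An element `x` of an `R`-algebra `B` is almost integral over `R` if all its powers lie in a
single finitely generated `R`-submodule of `B`. -/
def IsAlmostIntegralElem (R : Type*) {B : Type*} [CommRing R] [CommRing B] [Algebra R B]
    (x : B) : Prop :=
  ∃ M : Submodule R B, M.FG ∧ ∀ n : ℕ, x ^ n ∈ M

/-- `R` is completely integrally closed in the `R`-algebra `B` if every element of `B` that is
almost integral over `R` lies in the image of `R`. -/
def IsCompletelyIntegrallyClosedIn (R B : Type*) [CommRing R] [CommRing B] [Algebra R B] : Prop :=
  ∀ x : B, IsAlmostIntegralElem R x → x ∈ (algebraMap R B).range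

/-! If `r * b ∈ A` and `r ^ n ∣ t`, then `t * b ^ n ∈ A`. Hence an element `b` multiplied into `A`
by roots of `t` of arbitrarily large order has all its powers in the cyclic `A`-module `t⁻¹A`, so
it is almost integral over `A`. -/

theorem pow_pow_eq_apply_zero {M : Type*} [Monoid M] {r : ℕ → M} {p : ℕ}
    (hr : ∀ n, r (n + 1) ^ p = r n) (n : ℕ) : r n ^ p ^ n = r 0 := by
  induction n with
  | zero => rw [pow_zero, pow_one]
  | succ n ih => rw [pow_succ', pow_mul, hr, ih]

theorem pow_dvd_apply_zero {M : Type*} [Monoid M] {r : ℕ → M} {p : ℕ}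
    (hp : 1 < p) (hr : ∀ n, r (n + 1) ^ p = r n) {m n : ℕ} (hmn : m ≤ n) : r n ^ m ∣ r 0 := by
  rw [← pow_pow_eq_apply_zero hr n]
  exact pow_dvd_pow (r n) (hmn.trans (Nat.lt_pow_self hp).le)

section Algebra

variable {A B : Type*} [CommRing A] [CommRing B] [Algebra A B]

theorem algebraMap_mul_pow_mem_range_of_pow_dvd {r t : A} {b : B} {n : ℕ} (hrt : r ^ n ∣ t)
    (hb : algebraMap A B r * b ∈ (algebraMap A B).range) :
    algebraMap A B t * b ^ n ∈ (algebraMap A B).range := by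
  obtain ⟨c, rfl⟩ := hrt
  have factor : algebraMap A B (r ^ n * c) * b ^ n =
      algebraMap A B c * (algebraMap A B r * b) ^ n := by
    rw [map_mul, map_pow]
    ring
  rw [factor]
  exact mul_mem ((algebraMap A B).mem_range_self c) (pow_mem hb n)

theorem IsAlmostIntegralElem.of_forall_mul_pow_mem_range {t : A}
    (ht : IsUnit (algebraMap A B t)) {b : B}
    (hb : ∀ n : ℕ, algebraMap A B t * b ^ n ∈ (algebraMap A B).range) :
    IsAlmostIntegralElem A b := by
  obtain ⟨u, hu⟩ := ht.exists_left_inv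
  refine ⟨Submodule.span A {u}, Submodule.fg_span_singleton u, fun n => ?_⟩
  obtain ⟨a, ha⟩ := hb n
  refine Submodule.mem_span_singleton.mpr ⟨a, ?_⟩
  calc a • u = u * algebraMap A B t * b ^ n := by
        rw [Algebra.smul_def, ha, mul_comm, mul_assoc]
    _ = b ^ n := by rw [hu, one_mul]

theorem almostElements_eq_self_of_completelyIntegrallyClosed_general {ι : Type*} {t : A}
    (ht : IsUnit (algebraMap A B t)) (r : ι → A) (hr : ∀ m : ℕ, ∃ i, r i ^ m ∣ t)
    (hcic : IsCompletelyIntegrallyClosedIn A B) :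
    {b : B | ∀ i, algebraMap A B (r i) * b ∈ (algebraMap A B).range} =
      Set.range (algebraMap A B) := by
  ext b
  constructor
  · intro hb
    refine hcic b (.of_forall_mul_pow_mem_range ht fun m => ?_)
    obtain ⟨i, hi⟩ := hr m
    exact algebraMap_mul_pow_mem_range_of_pow_dvd hi (hb i)
  · rintro ⟨a, rfl⟩ i
    exact ⟨r i * a, map_mul _ _ _⟩

end Algebra

/-- Let `A` be a ring with a nonzero divisor `t` such that `A` is completely
integrally closed in `A[1/t]`, and fix a prime `p`.  Suppose `A` admits a compatible system of
`p`-power roots `t^{1/p^n} ∈ A` of `t`.  Then the subring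
`t^{-1/p^∞}A = {b ∈ A[1/t] : t^{1/p^n}·b ∈ A for all n > 0}` of `A[1/t]` equals the image of
`A`. -/
theorem almostElements_eq_self_of_completelyIntegrallyClosed
    (A : Type*) [CommRing A] (t : A) (ht : t ∈ nonZeroDivisors A)
    (p : ℕ) (hp : p.Prime)
    (tr : ℕ → A) (htr0 : tr 0 = t) (htr : ∀ n, tr (n + 1) ^ p = tr n)
    (At : Type*) [CommRing At] [Algebra A At] [IsLocalization.Away t At]
    (hcic : IsCompletelyIntegrallyClosedIn A At) :
    {b : At | ∀ n : ℕ, 0 < n → algebraMap A At (tr n) * b ∈ (algebraMap A At).range}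
      = Set.range (algebraMap A At) := by
  subst htr0
  have pow_dvd (m : ℕ) : ∃ n : {n : ℕ // 0 < n}, tr n ^ m ∣ tr 0 :=
    ⟨⟨m + 1, m.succ_pos⟩, pow_dvd_apply_zero hp.one_lt htr m.le_succ⟩
  simpa only [Subtype.forall] using
    almostElements_eq_self_of_completelyIntegrallyClosed_general
      (IsLocalization.Away.algebraMap_isUnit (tr 0)) (fun n : {n : ℕ // 0 < n} => tr n)
      pow_dvd hcic
end

section
/- Let A be a ring with an element t ∈ A, let Λ be a directed poset, and let {A_λ}_{λ∈Λ} be an inverse system of A-algebras. Suppose that each A_λ is t-torsion free and completely integrally closed in A_λ[1/t]. Then the inverse limit lim_λ A_λ is a t-torsion free A-algebra and is completely integrally closed in (lim_λ A_λ)[1/t]. -/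
/-- The inverse limit of an inverse system of rings, realized as the subring of compatible
families in the product. -/
def invLimitSubring {Λ : Type*} [Preorder Λ] (Aι : Λ → Type*) [∀ l, CommRing (Aι l)]
    (f : ∀ i j : Λ, i ≤ j → (Aι j →+* Aι i)) : Subring (∀ l, Aι l) where
  carrier := {x | ∀ (i j : Λ) (h : i ≤ j), f i j h (x j) = x i}
  zero_mem' := fun i j h => by simp
  one_mem' := fun i j h => by simp
  add_mem' := fun {a b} ha hb i j h => by
    simp only [Pi.add_apply, map_add, ha i j h, hb i j h]
  mul_mem' := fun {a b} ha hb i j h => by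
    simp only [Pi.mul_apply, map_mul, ha i j h, hb i j h]
  neg_mem' := fun {a} ha i j h => by
    simp only [Pi.neg_apply, map_neg, ha i j h]

open scoped nonZeroDivisors

section AlmostIntegral

variable {R B R' B' : Type*} [CommRing R] [CommRing B] [Algebra R B]
  [CommRing R'] [CommRing B'] [Algebra R' B']

theorem IsAlmostIntegralElem.map {x : B} (hx : IsAlmostIntegralElem R x)
    (g : R →+* R') (φ : B →+* B')
    (hφ : ∀ r, φ (algebraMap R B r) = algebraMap R' B' (g r)) :
    IsAlmostIntegralElem R' (φ x) := by
  obtain ⟨M, ⟨S, rfl⟩, hpow⟩ := hx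
  let φₛₗ : B →ₛₗ[g] B' :=
    { φ with map_smul' := fun r b => by simp [Algebra.smul_def, hφ] }
  refine ⟨Submodule.span R' (φₛₗ '' S), Submodule.fg_span (S.finite_toSet.image _), fun n => ?_⟩
  rw [← map_pow]
  exact Submodule.image_span_subset_span φₛₗ _ ⟨x ^ n, hpow n, rfl⟩

end AlmostIntegral

section Localization

variable {R : Type*} [CommRing R] {M : Submonoid R}
  {B : Type*} [CommRing B] [Algebra R B] [IsLocalization M B]

theorem mk'_mem_range_algebraMap_of_dvd {r : R} {m : M} (h : (m : R) ∣ r) :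
    IsLocalization.mk' B r m ∈ (algebraMap R B).range := by
  obtain ⟨a, rfl⟩ := h
  exact ⟨a, (IsLocalization.mk'_mul_cancel_left a m).symm⟩

theorem dvd_of_mk'_mem_range_algebraMap (hM : M ≤ R⁰) {r : R} {m : M}
    (h : IsLocalization.mk' B r m ∈ (algebraMap R B).range) : (m : R) ∣ r := by
  obtain ⟨a, ha⟩ := h
  refine ⟨a, IsLocalization.injective B hM ?_⟩
  rw [mul_comm, map_mul]
  exact IsLocalization.mk'_eq_iff_eq_mul.mp ha.symm

theorem IsCompletelyIntegrallyClosedIn.of_forall_dvd {ι : Type*}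
    {S C : ι → Type*} [∀ i, CommRing (S i)] [∀ i, CommRing (C i)] [∀ i, Algebra (S i) (C i)]
    {N : ∀ i, Submonoid (S i)} [∀ i, IsLocalization (N i) (C i)]
    (p : ∀ i, R →+* S i) (hMN : ∀ i, M ≤ (N i).comap (p i)) (hN : ∀ i, N i ≤ (S i)⁰)
    (hdvd : ∀ m ∈ M, ∀ r, (∀ i, p i m ∣ p i r) → m ∣ r)
    (hcic : ∀ i, IsCompletelyIntegrallyClosedIn (S i) (C i)) :
    IsCompletelyIntegrallyClosedIn R B := by
  intro x hx
  obtain ⟨r, m, rfl⟩ := IsLocalization.exists_mk'_eq M x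
  refine mk'_mem_range_algebraMap_of_dvd (hdvd m m.2 r fun i => ?_)
  have himage := hx.map (p i) (IsLocalization.map (C i) (p i) (hMN i)) (IsLocalization.map_eq _)
  rw [IsLocalization.map_mk'] at himage
  exact dvd_of_mk'_mem_range_algebraMap (hN i) (hcic i _ himage)

end Localization

theorem mem_nonZeroDivisors_pi {ι : Type*} {R : ι → Type*} [∀ i, MonoidWithZero (R i)]
    {x : ∀ i, R i} (hx : ∀ i, x i ∈ (R i)⁰) : x ∈ (∀ i, R i)⁰ :=
  ⟨fun y hy => funext fun i => (hx i).1 (y i) (congrFun hy i),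
    fun y hy => funext fun i => (hx i).2 (y i) (congrFun hy i)⟩

section InverseLimit

variable {Λ : Type*} [Preorder Λ] {Aι : Λ → Type*} [∀ l, CommRing (Aι l)]
  {f : ∀ i j : Λ, i ≤ j → (Aι j →+* Aι i)}

theorem invLimitSubring.mem_nonZeroDivisors {x : invLimitSubring Aι f}
    (hx : ∀ l, x.1 l ∈ (Aι l)⁰) : x ∈ (invLimitSubring Aι f)⁰ :=
  mem_nonZeroDivisors_of_injective (f := (invLimitSubring Aι f).subtype)
    Subtype.val_injective (mem_nonZeroDivisors_pi hx)

theorem invLimitSubring.dvd_of_forall_dvd {x y : invLimitSubring Aι f}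
    (hx : ∀ l, x.1 l ∈ (Aι l)⁰) (hdvd : ∀ l, x.1 l ∣ y.1 l) : x ∣ y := by
  choose q hq using hdvd
  have hq_mem : q ∈ invLimitSubring Aι f := fun i j h =>
    (mul_cancel_left_mem_nonZeroDivisors (hx i)).mp <| calc
      x.1 i * f i j h (q j) = f i j h (x.1 j * q j) := by rw [map_mul, x.2 i j h]
      _ = x.1 i * q i := by rw [← hq j, y.2 i j h, hq i]
  exact ⟨⟨q, hq_mem⟩, Subtype.ext (funext hq)⟩

theorem invLimit_completelyIntegrallyClosed_general
    (T : invLimitSubring Aι f) (hT : ∀ l, T.1 l ∈ (Aι l)⁰)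
    (hcic : ∀ l, IsCompletelyIntegrallyClosedIn (Aι l) (Localization.Away (T.1 l))) :
    T ∈ (invLimitSubring Aι f)⁰ ∧
      IsCompletelyIntegrallyClosedIn (invLimitSubring Aι f) (Localization.Away T) := by
  let proj (l : Λ) : invLimitSubring Aι f →+* Aι l :=
    (Pi.evalRingHom Aι l).comp (invLimitSubring Aι f).subtype
  have powers_le_comap (l : Λ) :
      Submonoid.powers T ≤ (Submonoid.powers (T.1 l)).comap (proj l) :=
    Submonoid.powers_le.mpr (Submonoid.mem_powers (T.1 l))
  have powers_le (l : Λ) : Submonoid.powers (T.1 l) ≤ (Aι l)⁰ := Submonoid.powers_le.mpr (hT l)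
  refine ⟨invLimitSubring.mem_nonZeroDivisors hT, .of_forall_dvd (M := Submonoid.powers T)
    proj powers_le_comap powers_le (fun m hm r hdvd => ?_) hcic⟩
  exact invLimitSubring.dvd_of_forall_dvd (fun l => powers_le l (powers_le_comap l hm)) hdvd

end InverseLimit

/-- Let `A` be a ring with an element `t`, `Λ` a directed poset, and
`{A_λ}` an inverse system of `A`-algebras.  If each `A_λ` is `t`-torsion free and completely
integrally closed in `A_λ[1/t]`, then the inverse limit is a `t`-torsion free `A`-algebra
(the image of `t` in it is a nonzero divisor) and is completely integrally closed in its
localization away from `t`. -/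
theorem invLimit_completelyIntegrallyClosed
    (A : Type*) [CommRing A] (t : A)
    (Λ : Type*) [PartialOrder Λ] [IsDirected Λ (· ≤ ·)]
    (Aι : Λ → Type*) [∀ l, CommRing (Aι l)] [∀ l, Algebra A (Aι l)]
    (f : ∀ i j : Λ, i ≤ j → (Aι j →+* Aι i))
    (hf_id : ∀ i, f i i le_rfl = RingHom.id (Aι i))
    (hf_comp : ∀ (i j k : Λ) (hij : i ≤ j) (hjk : j ≤ k),
        (f i j hij).comp (f j k hjk) = f i k (hij.trans hjk))
    (hf_alg : ∀ (i j : Λ) (h : i ≤ j) (a : A),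
        f i j h (algebraMap A (Aι j) a) = algebraMap A (Aι i) a)
    (htf : ∀ l, algebraMap A (Aι l) t ∈ nonZeroDivisors (Aι l))
    (hcic : ∀ l, IsCompletelyIntegrallyClosedIn (Aι l)
        (Localization.Away (algebraMap A (Aι l) t))) :
    ∃ htL : (fun l => algebraMap A (Aι l) t) ∈ invLimitSubring Aι f,
      (⟨fun l => algebraMap A (Aι l) t, htL⟩ : ↥(invLimitSubring Aι f))
          ∈ nonZeroDivisors ↥(invLimitSubring Aι f) ∧
      IsCompletelyIntegrallyClosedIn ↥(invLimitSubring Aι f)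
        (Localization.Away
          (⟨fun l => algebraMap A (Aι l) t, htL⟩ : ↥(invLimitSubring Aι f))) :=
  ⟨fun i j h => hf_alg i j h t,
    invLimit_completelyIntegrallyClosed_general ⟨_, fun i j h => hf_alg i j h t⟩ htf hcic⟩
end

section
/- Let A ⊆ B be a ring extension such that A is completely integrally closed in B, and fix a prime p. Suppose t ∈ A is an element such that B is t-torsion free and A admits a compatible system of p-power roots t^{1/p^n} ∈ A of t. Define, inside B[1/t], the subrings t^{−1/p^∞}A := {x ∈ A[1/t] : t^{1/p^n}·x ∈ A for all n > 0} and t^{−1/p^∞}B := {x ∈ B[1/t] : t^{1/p^n}·x ∈ B for all n > 0}. Then t^{−1/p^∞}A is completely integrally closed in t^{−1/p^∞}B. -/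
/-- For subsets `S ⊆ T` of a commutative ring, `x` is almost integral over `S` (relative to the
ambient subring `T`) if all powers of `x` lie in a finitely generated `S`-submodule of `T`,
i.e. there is a finite set `s ⊆ T` such that every power of `x` is an `S`-linear combination of
the elements of `s`. -/
def AlmostIntegralOverSet {C : Type*} [CommRing C] (S T : Set C) (x : C) : Prop :=
  ∃ s : Finset C, (↑s : Set C) ⊆ T ∧
    ∀ n : ℕ, ∃ c : C → C, (∀ y ∈ s, c y ∈ S) ∧ x ^ n = ∑ y ∈ s, c y * y

open Function Pointwise

section AlmostIntegral

variable {A B C : Type*} [CommRing A] [CommRing B] [CommRing C] [Algebra A B] [Algebra A C]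

lemma IsAlmostIntegralElem.of_pow_add_mem {M : Submodule A B} (hM : M.FG) {b : B} (k : ℕ)
    (hb : ∀ n, b ^ (n + k) ∈ M) : IsAlmostIntegralElem A b := by
  refine ⟨Submodule.span A ((b ^ ·) '' Set.Iio k) ⊔ M,
    (Submodule.fg_span ((Set.finite_Iio k).image _)).sup hM, fun n => ?_⟩
  rcases lt_or_ge n k with hn | hn
  · exact Submodule.mem_sup_left (Submodule.subset_span ⟨n, hn, rfl⟩)
  · exact Submodule.mem_sup_right (Nat.sub_add_cancel hn ▸ hb (n - k))

lemma IsAlmostIntegralElem.of_map_pow_add_mem {φ : B →ₐ[A] C} (hφ : Injective φ)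
    {M : Submodule A C} (hM : M.FG) (hMφ : M ≤ φ.toLinearMap.range) {b : B} (k : ℕ)
    (hb : ∀ n, φ b ^ (n + k) ∈ M) : IsAlmostIntegralElem A b := by
  have hfg : (M.comap φ.toLinearMap).FG := by
    refine Submodule.fg_of_fg_map_injective φ.toLinearMap hφ ?_
    rwa [Submodule.map_comap_eq_of_le hMφ]
  exact .of_pow_add_mem hfg k fun n => by simpa using hb n

namespace AlmostIntegralOverSet

variable {S T : Set C} {f : A} {x : C}

lemma exists_fg_smul_pow_mem (hx : AlmostIntegralOverSet S T x)
    (hS : ∀ c ∈ S, f • c ∈ (algebraMap A C).range) :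
    ∃ M : Submodule A C, M.FG ∧ M ≤ Submodule.span A T ∧ ∀ n, f • x ^ n ∈ M := by
  obtain ⟨s, hsT, hs⟩ := hx
  refine ⟨Submodule.span A s, ⟨s, rfl⟩, Submodule.span_mono hsT, fun n => ?_⟩
  obtain ⟨c, hcS, hsum⟩ := hs n
  rw [hsum, Finset.smul_sum]
  refine Submodule.sum_mem _ fun y hy => ?_
  obtain ⟨a, ha⟩ := hS (c y) (hcS y hy)
  rw [← smul_mul_assoc, ← ha, ← Algebra.smul_def]
  exact Submodule.smul_mem _ a (Submodule.subset_span hy)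

lemma isAlmostIntegralElem_of_map_eq_smul (hx : AlmostIntegralOverSet S T x) {φ : B →ₐ[A] C}
    (hφ : Injective φ) (hS : ∀ c ∈ S, f • c ∈ (algebraMap A C).range)
    (hT : ∀ y ∈ T, f • y ∈ φ.range) {b : B} (hb : φ b = f • x) : IsAlmostIntegralElem A b := by
  obtain ⟨M, hM, hMT, hxM⟩ := hx.exists_fg_smul_pow_mem hS
  have hfM : f • M ≤ φ.toLinearMap.range := by
    refine (smul_mono_right f hMT).trans ?_
    rw [Submodule.smul_span, Submodule.span_le]
    rintro _ ⟨y, hy, rfl⟩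
    exact hT y hy
  refine .of_map_pow_add_mem hφ (hM.map _) hfM 2 fun n => ?_
  have hpow : φ b ^ (n + 2) = f ^ n • f • f • x ^ (n + 2) := by
    rw [hb, smul_pow, smul_smul, smul_smul]
    ring_nf
  rw [hpow]
  exact Submodule.smul_mem _ _ (Submodule.smul_mem_pointwise_smul _ f M (hxM (n + 2)))

end AlmostIntegralOverSet

lemma IsCompletelyIntegrallyClosedIn.smul_mem_range (h : IsCompletelyIntegrallyClosedIn A B)
    {φ : B →ₐ[A] C} (hφ : Injective φ) {S T : Set C} {f : A} {x : C}
    (hx : AlmostIntegralOverSet S T x) (hS : ∀ c ∈ S, f • c ∈ (algebraMap A C).range)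
    (hT : ∀ y ∈ T, f • y ∈ φ.range) (hxT : x ∈ T) : f • x ∈ (algebraMap A C).range := by
  obtain ⟨b, hb⟩ := hT x hxT
  obtain ⟨a, rfl⟩ := h b (hx.isAlmostIntegralElem_of_map_eq_smul hφ hS hT hb)
  exact ⟨a, by simpa using hb⟩

end AlmostIntegral

/-- The elements of `C` that every `f ∈ F` multiplies into `S`. For `F = {t^{1/p^n} : n > 0}` this
is the set written `t^{-1/p^∞}S`. -/
def multipliersInto {A C : Type*} [CommRing A] [CommRing C] [Algebra A C] (F : Set A)
    (S : Set C) : Set C :=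
  {x | ∀ f ∈ F, algebraMap A C f * x ∈ S}

theorem almostElements_completelyIntegrallyClosed_general {A B C : Type*} [CommRing A]
    [CommRing B] [CommRing C] [Algebra A B] [Algebra B C] [Algebra A C] [IsScalarTower A B C]
    (hBC : Injective (algebraMap B C)) (hcic : IsCompletelyIntegrallyClosedIn A B)
    {t : A} {F : Set A} (hF : ∃ f ∈ F, ∃ k, f ∣ t ^ k) :
    ∀ x ∈ multipliersInto F ((algebraMap B C).range : Set C),
      AlmostIntegralOverSet
        {x : C | (∃ (a : A) (k : ℕ), algebraMap A C t ^ k * x = algebraMap A C a) ∧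
            x ∈ multipliersInto F ((algebraMap A C).range : Set C)}
        (multipliersInto F ((algebraMap B C).range : Set C)) x →
      x ∈ {x : C | (∃ (a : A) (k : ℕ), algebraMap A C t ^ k * x = algebraMap A C a) ∧
            x ∈ multipliersInto F ((algebraMap A C).range : Set C)} := by
  intro x hxT hx
  have hFx : x ∈ multipliersInto F ((algebraMap A C).range : Set C) := by
    intro f hf
    rw [← Algebra.smul_def]
    refine hcic.smul_mem_range (φ := IsScalarTower.toAlgHom A B C) hBC hx ?_ ?_ hxT
    · exact fun c hc => Algebra.smul_def f c ▸ hc.2 f hf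
    · exact fun y hy => Algebra.smul_def f y ▸ hy f hf
  obtain ⟨f, hf, k, g, hg⟩ := hF
  obtain ⟨a, ha⟩ := hFx f hf
  refine ⟨⟨g * a, k, ?_⟩, hFx⟩
  rw [← map_pow, hg, mul_comm f, map_mul, map_mul, ha, mul_assoc]

/-- Let `A ⊆ B` with `A` completely integrally closed in `B`, let `t ∈ A` be
such that `B` is `t`-torsion free, and suppose `A` has a compatible system of `p`-power roots of
`t`.  Then, inside `B[1/t]`, the ring `t^{-1/p^∞}A = {x ∈ A[1/t] : t^{1/p^n}·x ∈ A, ∀n>0}` is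
completely integrally closed in `t^{-1/p^∞}B = {x ∈ B[1/t] : t^{1/p^n}·x ∈ B, ∀n>0}`. -/
theorem almostElements_completelyIntegrallyClosed
    (A B : Type*) [CommRing A] [CommRing B] [Algebra A B]
    (hinj : Function.Injective (algebraMap A B))
    (hcic : IsCompletelyIntegrallyClosedIn A B)
    (p : ℕ) (hp : p.Prime)
    (t : A) (htf : algebraMap A B t ∈ nonZeroDivisors B)
    (tr : ℕ → A) (htr0 : tr 0 = t) (htr : ∀ n, tr (n + 1) ^ p = tr n)
    (Bt : Type*) [CommRing Bt] [Algebra B Bt] [IsLocalization.Away (algebraMap A B t) Bt]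
    [Algebra A Bt] [IsScalarTower A B Bt] :
    ∀ x ∈ {x : Bt | ∀ n : ℕ, 0 < n →
              algebraMap A Bt (tr n) * x ∈ (algebraMap B Bt).range},
      AlmostIntegralOverSet
        {x : Bt | (∃ (a : A) (k : ℕ), algebraMap A Bt t ^ k * x = algebraMap A Bt a) ∧
            ∀ n : ℕ, 0 < n → algebraMap A Bt (tr n) * x ∈ (algebraMap A Bt).range}
        {x : Bt | ∀ n : ℕ, 0 < n → algebraMap A Bt (tr n) * x ∈ (algebraMap B Bt).range}
        x →
      x ∈ {x : Bt | (∃ (a : A) (k : ℕ), algebraMap A Bt t ^ k * x = algebraMap A Bt a) ∧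
            ∀ n : ℕ, 0 < n → algebraMap A Bt (tr n) * x ∈ (algebraMap A Bt).range} := by
  have hBC : Injective (algebraMap B Bt) :=
    IsLocalization.injective Bt (Submonoid.powers_le.mpr htf)
  have ht : tr 1 ∣ t := htr0 ▸ htr 0 ▸ dvd_pow_self (tr 1) hp.ne_zero
  simpa [multipliersInto] using almostElements_completelyIntegrallyClosed_general hBC hcic
    (F := tr '' Set.Ioi 0) ⟨tr 1, ⟨1, Nat.one_pos, rfl⟩, 1, by simpa using ht⟩
end

section
/- Let R be a Noetherian domain that is integrally closed in its field of fractions, let R^+ be the absolute integral closure of R, and let A be a ring with R ⊆ A ⊆ R^+. Then A is integrally closed in Frac(A) if and only if A is completely integrally closed in Frac(A). -/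
/-!
Call `x` almost integral over a domain `A` if `a * x ^ n ∈ A` for all `n` and some fixed `a ≠ 0`.
Let `x ∈ Frac A` be almost integral over `A`, hence over `R⁺`. So are its conjugates over `Frac R`,
because automorphisms preserve `R⁺`, and so are the coefficients of its minimal polynomial, because
the elements almost integral over `R⁺` form a ring. As every nonzero `a ∈ R⁺` has a nonzero multiple
in `R`, these coefficients are almost integral over `R`, and thus lie in `R` when `R` is Noetherian
and normal. Therefore `x` is integral over `R`, and `x ∈ A` as soon as `A` is integrally closed.
-/

open Polynomial nonZeroDivisors

section AlmostIntegralElem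

variable {R B : Type*} [CommRing R] [CommRing B] [Algebra R B] {x : B}

theorem isAlmostIntegralElem_of_isIntegral (hx : IsIntegral R x) : IsAlmostIntegralElem R x :=
  ⟨(Algebra.adjoin R {x}).toSubmodule, hx.fg_adjoin_singleton,
    fun n ↦ pow_mem (Algebra.self_mem_adjoin_singleton R x) n⟩

theorem isAlmostIntegralElem_iff_isAlmostIntegral [IsFractionRing R B] :
    IsAlmostIntegralElem R x ↔ IsAlmostIntegral R x := by
  constructor
  · rintro ⟨M, hM, hxM⟩
    obtain ⟨r, hr, hrM⟩ := FractionalIdeal.isFractional_of_fg (S := R⁰) hM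
    exact ⟨r, hr, fun n ↦ hrM _ (hxM n)⟩
  · rintro ⟨r, hr, hrx⟩
    obtain ⟨u, hu⟩ := IsLocalization.map_units B (⟨r, hr⟩ : R⁰)
    refine ⟨R ∙ (↑u⁻¹ : B), Submodule.fg_span_singleton _, fun n ↦ ?_⟩
    obtain ⟨b, hb⟩ := hrx n
    refine Submodule.mem_span_singleton.mpr ⟨b, ?_⟩
    rw [Algebra.smul_def, hb, Algebra.smul_def, ← hu, mul_comm, Units.inv_mul_cancel_left]

theorem IsCompletelyIntegrallyClosedIn.isIntegrallyClosed [IsFractionRing R B]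
    (h : IsCompletelyIntegrallyClosedIn R B) : IsIntegrallyClosed R :=
  (isIntegrallyClosed_iff B).mpr fun hx ↦ h _ (isAlmostIntegralElem_of_isIntegral hx)

theorem IsAlmostIntegralElem.isIntegral [IsNoetherianRing R] (hx : IsAlmostIntegralElem R x) :
    IsIntegral R x := by
  obtain ⟨M, hM, hxM⟩ := hx
  have adjoin_le : (Algebra.adjoin R {x}).toSubmodule ≤ M := by
    rw [Algebra.adjoin_eq_span, ← Submonoid.powers_eq_closure, Submodule.span_le]
    rintro _ ⟨n, rfl⟩
    exact hxM n
  exact .of_mem_of_fg _ (hM.of_le adjoin_le) x (Algebra.self_mem_adjoin_singleton R x)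

theorem isCompletelyIntegrallyClosedIn_of_isNoetherianRing [IsNoetherianRing R]
    [IsIntegrallyClosed R] [IsFractionRing R B] : IsCompletelyIntegrallyClosedIn R B :=
  fun _ hx ↦ IsIntegrallyClosed.isIntegral_iff.mp hx.isIntegral

end AlmostIntegralElem

section IntegralClosure

theorem isAlmostIntegral_integralClosure_iff {R L : Type*} [CommRing R] [CommRing L] [IsDomain L]
    [Algebra R L] {x : L} :
    IsAlmostIntegral (integralClosure R L) x ↔
      ∃ a : L, a ≠ 0 ∧ IsIntegral R a ∧ ∀ n : ℕ, IsIntegral R (a * x ^ n) := by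
  constructor
  · rintro ⟨a, ha, hax⟩
    refine ⟨a, fun h ↦ nonZeroDivisors.ne_zero ha (Subtype.ext h), a.2, fun n ↦ ?_⟩
    obtain ⟨b, hb : (b : L) = a * x ^ n⟩ := hax n
    exact hb ▸ b.2
  · rintro ⟨a, ha, haint, hax⟩
    exact ⟨⟨a, haint⟩, mem_nonZeroDivisors_of_ne_zero fun h ↦ ha congr($h),
      fun n ↦ ⟨⟨_, hax n⟩, rfl⟩⟩

theorem isAlmostIntegral_integralClosure_map {R A B C : Type*} [CommRing R] [CommRing A]
    [CommRing B] [CommRing C] [IsDomain C] [Algebra R A] [Algebra.IsIntegral R A] [Algebra R B]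
    [Algebra A B] [IsScalarTower R A B] [FaithfulSMul A B] [Algebra R C]
    {f : B →ₐ[R] C} (hf : Function.Injective f) {x : B} (hx : IsAlmostIntegral A x) :
    IsAlmostIntegral (integralClosure R C) (f x) := by
  have : Nontrivial A := (f.toRingHom.comp (algebraMap A B)).domain_nontrivial
  have isIntegral_image (a : A) : IsIntegral R (f (algebraMap A B a)) :=
    (Algebra.IsIntegral.isIntegral a).algebraMap.map f
  obtain ⟨a, ha, hax⟩ := hx
  refine isAlmostIntegral_integralClosure_iff.mpr
    ⟨f (algebraMap A B a), ?_, isIntegral_image a, fun n ↦ ?_⟩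
  · rw [map_ne_zero_iff f hf, map_ne_zero_iff _ (FaithfulSMul.algebraMap_injective A B)]
    exact nonZeroDivisors.ne_zero ha
  · obtain ⟨b, hb⟩ := hax n
    rw [← map_pow, ← map_mul, ← Algebra.smul_def, ← hb]
    exact isIntegral_image b

variable {R K L : Type*} [CommRing R] [Field K] [Field L] [Algebra R K] [Algebra K L] [Algebra R L]
  [IsScalarTower R K L]

theorem isAlmostIntegral_of_algebraMap_integralClosure [IsDomain R] [IsIntegrallyClosed R]
    [IsFractionRing R K] {c : K}
    (hc : IsAlmostIntegral (integralClosure R L) (algebraMap K L c)) : IsAlmostIntegral R c := by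
  obtain ⟨a, ha, haint, hac⟩ := isAlmostIntegral_integralClosure_iff.mp hc
  -- Replace `a` by a nonzero multiple `a * b` lying in `R`.
  obtain ⟨r, hr, b, hrb⟩ : ∃ r : R, r ≠ 0 ∧ (⟨a, haint⟩ : integralClosure R L) ∣ algebraMap R _ r :=
    (Algebra.IsIntegral.isIntegral _).isAlgebraic.exists_nonzero_dvd
      (mem_nonZeroDivisors_of_ne_zero fun h ↦ ha congr($h))
  replace hrb : algebraMap R L r = a * b := congr($hrb)
  refine ⟨r, mem_nonZeroDivisors_of_ne_zero hr, fun n ↦ IsIntegrallyClosed.isIntegral_iff.mp ?_⟩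
  rw [← isIntegral_algebraMap_iff (algebraMap K L).injective]
  have : algebraMap K L (r • c ^ n) = b * (a * algebraMap K L c ^ n) := by
    rw [Algebra.smul_def, map_mul, map_pow, ← IsScalarTower.algebraMap_apply, hrb]
    ring
  exact this ▸ b.2.mul (hac n)

theorem isAlmostIntegral_integralClosure_coeff_minpoly [Normal K L] {x : L}
    (hx : IsAlmostIntegral (integralClosure R L) x) (n : ℕ) :
    IsAlmostIntegral (integralClosure R L) (algebraMap K L ((minpoly K x).coeff n)) := by
  have hxK : IsIntegral K x := Algebra.IsIntegral.isIntegral x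
  have root_mem (y : L) (hy : y ∈ ((minpoly K x).map (algebraMap K L)).roots) :
      IsAlmostIntegral (integralClosure R L) y := by
    have hy_root : aeval y (minpoly K x) = 0 := by
      rw [← eval_map_algebraMap]
      exact isRoot_of_mem_roots hy
    obtain ⟨σ, rfl⟩ := minpoly.exists_algEquiv_of_root' hxK.isAlgebraic hy_root
    exact isAlmostIntegral_integralClosure_map (f := σ.toAlgHom.restrictScalars R) σ.injective hx
  have lifts_minpoly : (minpoly K x).map (algebraMap K L) ∈
      lifts (completeIntegralClosure (integralClosure R L) L).val.toRingHom :=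
    (Normal.splits inferInstance x).mem_lift_of_roots_mem_range ((minpoly.monic hxK).map _) _
      fun y hy ↦ ⟨⟨y, root_mem y hy⟩, rfl⟩
  obtain ⟨c, hc⟩ := (lifts_iff_coeff_lifts _).mp lifts_minpoly n
  rw [← coeff_map, ← hc]
  exact c.2

theorem IsCompletelyIntegrallyClosedIn.isIntegral_of_isAlmostIntegral_integralClosure [IsDomain R]
    [IsFractionRing R K] [Normal K L] (hR : IsCompletelyIntegrallyClosedIn R K) {x : L}
    (hx : IsAlmostIntegral (integralClosure R L) x) : IsIntegral R x := by
  have := hR.isIntegrallyClosed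
  have hxK : IsIntegral K x := Algebra.IsIntegral.isIntegral x
  have coeff_mem (n : ℕ) : (minpoly K x).coeff n ∈ (algebraMap R K).range :=
    hR _ <| isAlmostIntegralElem_iff_isAlmostIntegral.mpr <|
      isAlmostIntegral_of_algebraMap_integralClosure <|
        isAlmostIntegral_integralClosure_coeff_minpoly hx n
  obtain ⟨p, hp, -, hp_monic⟩ := lifts_and_natDegree_eq_and_monic
    ((lifts_iff_coeff_lifts _).mpr coeff_mem) (minpoly.monic hxK)
  refine ⟨p, hp_monic, ?_⟩
  rw [← aeval_def, ← aeval_map_algebraMap K, hp, minpoly.aeval]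

end IntegralClosure

section IntegralExtension

variable {R K A F : Type*} [CommRing R] [IsDomain R] [Field K] [Algebra R K] [IsFractionRing R K]
  [CommRing A] [Algebra R A] [FaithfulSMul R A] [Algebra.IsIntegral R A]
  [Field F] [Algebra A F] [IsFractionRing A F]

theorem IsCompletelyIntegrallyClosedIn.isIntegral_of_isAlmostIntegral
    (hR : IsCompletelyIntegrallyClosedIn R K) {x : F} (hx : IsAlmostIntegral A x) :
    IsIntegral A x := by
  let L := AlgebraicClosure F
  let _ : Algebra R F := Algebra.compHom F (algebraMap R A)
  have : IsScalarTower R A F := .of_algebraMap_eq fun _ ↦ rfl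
  have : FaithfulSMul R F := .trans R A F
  have : FaithfulSMul R L := .trans R F L
  let _ : Algebra K L := (IsFractionRing.lift (FaithfulSMul.algebraMap_injective R L)).toAlgebra
  have : IsScalarTower R K L := .of_algebraMap_eq fun r ↦
    (IsFractionRing.lift_algebraMap (FaithfulSMul.algebraMap_injective R L) r).symm
  have : Algebra.IsAlgebraic R F := (IsFractionRing.isAlgebraic_iff' R A F).mp inferInstance
  have : Algebra.IsAlgebraic R L := .trans R F L
  have : Algebra.IsAlgebraic K L := IsFractionRing.comap_isAlgebraic_iff.mp this
  have : IsAlgClosure K L := ⟨inferInstance, this⟩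
  have : Normal K L := IsAlgClosure.normal K L
  have hxL : IsAlmostIntegral (integralClosure R L) (algebraMap F L x) :=
    isAlmostIntegral_integralClosure_map (f := IsScalarTower.toAlgHom R F L)
      (algebraMap F L).injective hx
  have hxR : IsIntegral R x := (isIntegral_algebraMap_iff (algebraMap F L).injective).mp
    (hR.isIntegral_of_isAlmostIntegral_integralClosure hxL)
  exact hxR.tower_top

theorem integrallyClosed_iff_completelyIntegrallyClosed_of_subring_absoluteIntegralClosure_general
    (hR : IsCompletelyIntegrallyClosedIn R K) :
    IsIntegrallyClosed A ↔ IsCompletelyIntegrallyClosedIn A F :=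
  ⟨fun _ _ hx ↦ IsIntegrallyClosed.isIntegral_iff.mp
      (hR.isIntegral_of_isAlmostIntegral (isAlmostIntegralElem_iff_isAlmostIntegral.mp hx)),
    IsCompletelyIntegrallyClosedIn.isIntegrallyClosed⟩

end IntegralExtension

/-- Let `R` be a Noetherian integrally closed domain with absolute integral
closure `R⁺` (the integral closure of `R` in a fixed algebraic closure of `Frac R`), and let
`A` be a ring with `R ⊆ A ⊆ R⁺`.  Then `A` is integrally closed in `Frac A` iff it is
completely integrally closed in `Frac A`. -/
theorem integrallyClosed_iff_completelyIntegrallyClosed_of_subring_absoluteIntegralClosure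
    (R : Type*) [CommRing R] [IsDomain R] [IsNoetherianRing R] [IsIntegrallyClosed R]
    (A : Subring (AlgebraicClosure (FractionRing R)))
    (hRA : (algebraMap R (AlgebraicClosure (FractionRing R))).range ≤ A)
    (hAplus : ∀ x ∈ A, IsIntegral R x) :
    IsIntegrallyClosed ↥A ↔
      IsCompletelyIntegrallyClosedIn ↥A (FractionRing ↥A) := by
  let A' : Subalgebra R (AlgebraicClosure (FractionRing R)) :=
    { A with algebraMap_mem' := fun r ↦ hRA ⟨r, rfl⟩ }
  have : Algebra.IsIntegral R A' := A'.isIntegral_iff.mpr hAplus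
  have hR : IsCompletelyIntegrallyClosedIn R (FractionRing R) :=
    isCompletelyIntegrallyClosedIn_of_isNoetherianRing
  have : FaithfulSMul R (AlgebraicClosure (FractionRing R)) := .trans R (FractionRing R) _
  exact integrallyClosed_iff_completelyIntegrallyClosed_of_subring_absoluteIntegralClosure_general
    (A := A') hR
end

section
/- Let A be a domain that is integrally closed in its field of fractions Frac(A), and let Frac(A) ↪ B be an integral ring extension with B reduced. Let C be the integral closure of A in B. Then for every prime ideal 𝔭 of C, the localization C_𝔭 is a normal domain, i.e. an integral domain integrally closed in its field of fractions. -/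
/-!
Let `C` be the integral closure of `A` in `B`, and let `L` be the localization of `B` at the
complement of `𝔭` in `C`. Integral closures commute with localization, so `C_𝔭` is integrally
closed in `L`; in particular every idempotent of `L`, being a root of `X² - X`, lies in the local
ring `C_𝔭` and is therefore `0` or `1`. But `L` is reduced and zero-dimensional because `B` is,
hence von Neumann regular: every nonzero `x` divides a nonzero idempotent, which must be `1`. So `L`
is a field, and a ring integrally closed in a field is a normal domain.
-/

section ZeroDimensional

variable {R S : Type*} [CommRing R] [CommRing S] [Algebra R S]

theorem krullDimLE_zero_of_isIntegral [Ring.KrullDimLE 0 R] [Algebra.IsIntegral R S] :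
    Ring.KrullDimLE 0 S :=
  .mk₀ fun I _ ↦ Ideal.isMaximal_of_isIntegral_of_isMaximal_comap (R := R) I inferInstance

theorem krullDimLE_zero_of_isLocalization [Ring.KrullDimLE 0 R] (M : Submonoid R)
    [IsLocalization M S] : Ring.KrullDimLE 0 S := by
  refine .mk₀ fun I hI ↦ ?_
  obtain ⟨J, hJ, hIJ⟩ := I.exists_le_maximal hI.ne_top
  have hcomap : I.under R = J.under R :=
    Ideal.IsMaximal.eq_of_le inferInstance (Ideal.IsPrime.ne_top inferInstance)
      (Ideal.comap_mono hIJ)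
  rwa [(IsLocalization.orderEmbedding M S).injective hcomap]

theorem exists_mul_mul_eq_self [IsReduced R] [Ring.KrullDimLE 0 R] (x : R) :
    ∃ y, x * y * x = x := by
  suffices h : x ∈ Ideal.span {x * x} by
    obtain ⟨y, hy⟩ := Ideal.mem_span_singleton'.mp h
    exact ⟨y, by linear_combination hy⟩
  refine Ideal.mem_of_localization_maximal fun P _ ↦ ?_
  have := krullDimLE_zero_of_isLocalization (S := Localization.AtPrime P) P.primeCompl
  let := (Ring.KrullDimLE.isField_of_isReduced (R := Localization.AtPrime P)).toField
  set y := algebraMap R (Localization.AtPrime P) x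
  rw [Ideal.map_span, Set.image_singleton, map_mul, Ideal.mem_span_singleton']
  exact ⟨y⁻¹, by rw [← mul_assoc, inv_mul_mul_self]⟩

theorem isField_of_forall_isIdempotentElem [Nontrivial R] [IsReduced R] [Ring.KrullDimLE 0 R]
    (h : ∀ e : R, IsIdempotentElem e → e = 0 ∨ e = 1) : IsField R := by
  refine ⟨exists_pair_ne R, mul_comm, fun {x} hx ↦ ?_⟩
  obtain ⟨y, hy⟩ := exists_mul_mul_eq_self x
  have hidem : IsIdempotentElem (x * y) := by rw [IsIdempotentElem, ← mul_assoc, hy]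
  refine ⟨y, (h _ hidem).resolve_left fun h0 ↦ hx ?_⟩
  rw [← hy, h0, zero_mul]

end ZeroDimensional

section IntegrallyClosedIn

variable {R S : Type*} [CommRing R] [CommRing S] [Algebra R S]

theorem isIntegral_of_isIdempotentElem {e : S} (he : IsIdempotentElem e) : IsIntegral R e :=
  ⟨.X ^ 2 - .X, by monicity!, by simp [sq, he.eq]⟩

theorem eq_zero_or_one_of_isIdempotentElem [IsLocalRing R] {e : R} (he : IsIdempotentElem e) :
    e = 0 ∨ e = 1 :=
  (IsLocalRing.isUnit_or_isUnit_one_sub_self e).symm.imp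
    (fun h ↦ by simpa using (IsIdempotentElem.iff_eq_one_of_isUnit h).mp he.one_sub)
    (fun h ↦ (IsIdempotentElem.iff_eq_one_of_isUnit h).mp he)

section Localization

variable (Rₘ : Type*) {Sₘ : Type*} [CommRing Rₘ] [CommRing Sₘ] [Algebra R Rₘ] [Algebra S Sₘ]
  [Algebra Rₘ Sₘ] [Algebra R Sₘ] [IsScalarTower R Rₘ Sₘ] [IsScalarTower R S Sₘ]

theorem exists_isIntegral_smul_of_isIntegral_algebraMap (M : Submonoid R) [IsLocalization M Rₘ]
    [IsLocalization (Algebra.algebraMapSubmonoid S M) Sₘ] {b : S}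
    (hb : IsIntegral Rₘ (algebraMap S Sₘ b)) : ∃ m ∈ M, IsIntegral R (m • b) := by
  obtain ⟨⟨m, hm⟩, hmb⟩ := hb.exists_multiple_integral_of_isLocalization M _
  rw [Submonoid.smul_def, ← algebraMap.coe_smul] at hmb
  obtain ⟨t, ht, htmb⟩ := IsLocalization.exists_isIntegral_smul_of_isIntegral_map M hmb
  exact ⟨t * m, mul_mem ht hm, by rwa [mul_smul]⟩

theorem isIntegrallyClosedIn_of_isLocalization (M : Submonoid R) [IsLocalization M Rₘ]
    [IsLocalization (Algebra.algebraMapSubmonoid S M) Sₘ] [IsIntegrallyClosedIn R S] :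
    IsIntegrallyClosedIn Rₘ Sₘ := by
  refine isIntegrallyClosedIn_iff.mpr ⟨?_, fun {x} hx ↦ ?_⟩
  · rw [IsLocalization.algebraMap_eq_map_map_submonoid M S Rₘ Sₘ]
    have : IsLocalization (M.map (algebraMap R S)) Sₘ :=
      ‹IsLocalization (Algebra.algebraMapSubmonoid S M) Sₘ›
    exact IsLocalization.map_injective_of_injective M Rₘ Sₘ
      (IsIntegralClosure.algebraMap_injective R R S)
  · obtain ⟨b, ⟨_, s, hs, rfl⟩, rfl⟩ :=
      IsLocalization.exists_mk'_eq (Algebra.algebraMapSubmonoid S M) x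
    have hb : IsIntegral Rₘ (algebraMap S Sₘ b) := by
      rw [← IsLocalization.mk'_spec Sₘ b
          ⟨algebraMap R S s, Algebra.mem_algebraMapSubmonoid_of_mem ⟨s, hs⟩⟩,
        ← IsScalarTower.algebraMap_apply, IsScalarTower.algebraMap_apply R Rₘ Sₘ]
      exact hx.mul isIntegral_algebraMap
    obtain ⟨m, hm, hmb⟩ := exists_isIntegral_smul_of_isIntegral_algebraMap Rₘ M hb
    obtain ⟨c, hc⟩ := IsIntegrallyClosedIn.isIntegral_iff.mp hmb
    refine ⟨IsLocalization.mk' Rₘ c ⟨m * s, mul_mem hm hs⟩, ?_⟩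
    rw [IsLocalization.algebraMap_mk' S, IsLocalization.mk'_eq_iff_eq, hc, Algebra.smul_def]
    congr 1
    simp only [map_mul]
    ring

end Localization

theorem isField_of_isIntegrallyClosedIn [IsLocalRing R] [IsReduced S] [Ring.KrullDimLE 0 S]
    [IsIntegrallyClosedIn R S] : IsField S := by
  have hinj : Function.Injective (algebraMap R S) := IsIntegralClosure.algebraMap_injective R R S
  have : Nontrivial S := hinj.nontrivial
  refine isField_of_forall_isIdempotentElem fun e he ↦ ?_
  obtain ⟨c, rfl⟩ := IsIntegrallyClosedIn.isIntegral_iff.mp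
    (isIntegral_of_isIdempotentElem (R := R) he)
  have hc : IsIdempotentElem c := hinj (by rw [map_mul, he.eq])
  exact (eq_zero_or_one_of_isIdempotentElem hc).imp (by rintro rfl; exact map_zero _)
    (by rintro rfl; exact map_one _)

variable (R S) in
theorem isDomain_and_isIntegrallyClosed_of_isIntegrallyClosedIn [IsLocalRing R] [IsReduced S]
    [Ring.KrullDimLE 0 S] [IsIntegrallyClosedIn R S] : IsDomain R ∧ IsIntegrallyClosed R := by
  let : Field S := (isField_of_isIntegrallyClosedIn (R := R)).toField
  have : FaithfulSMul R S := (faithfulSMul_iff_algebraMap_injective R S).mpr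
    (IsIntegralClosure.algebraMap_injective R R S)
  exact ⟨(FaithfulSMul.algebraMap_injective R S).isDomain _, .of_isIntegrallyClosedIn R S⟩

end IntegrallyClosedIn

theorem localization_integralClosure_isNormalDomain_general
    (C B : Type*) [CommRing C] [CommRing B] [Algebra C B] [IsIntegrallyClosedIn C B]
    [IsReduced B] [Ring.KrullDimLE 0 B] (𝔭 : Ideal C) [𝔭.IsPrime] :
    IsDomain (Localization.AtPrime 𝔭) ∧ IsIntegrallyClosed (Localization.AtPrime 𝔭) := by
  let L := Localization (Algebra.algebraMapSubmonoid B 𝔭.primeCompl)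
  have : Ring.KrullDimLE 0 L :=
    krullDimLE_zero_of_isLocalization (Algebra.algebraMapSubmonoid B 𝔭.primeCompl)
  have : IsIntegrallyClosedIn (Localization.AtPrime 𝔭) L :=
    isIntegrallyClosedIn_of_isLocalization (S := B) _ 𝔭.primeCompl
  exact isDomain_and_isIntegrallyClosed_of_isIntegrallyClosedIn _ L

/-- Let `A` be a domain integrally closed in its field of fractions, and let
`Frac A ↪ B` be an integral ring extension with `B` reduced.  Let `C` be the integral closure
of `A` in `B`.  Then for every prime ideal `𝔭` of `C`, the localization `C_𝔭` is a normal
domain. -/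
theorem localization_integralClosure_isNormalDomain
    (A : Type*) [CommRing A] [IsDomain A] [IsIntegrallyClosed A]
    (B : Type*) [CommRing B] [IsReduced B]
    [Algebra (FractionRing A) B] [Algebra.IsIntegral (FractionRing A) B]
    (hinj : Function.Injective (algebraMap (FractionRing A) B))
    [Algebra A B] [IsScalarTower A (FractionRing A) B]
    (𝔭 : Ideal ↥(integralClosure A B)) [𝔭.IsPrime] :
    IsDomain (Localization.AtPrime 𝔭) ∧ IsIntegrallyClosed (Localization.AtPrime 𝔭) := by
  have : Ring.KrullDimLE 0 B := krullDimLE_zero_of_isIntegral (R := FractionRing A)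
  exact localization_integralClosure_isNormalDomain_general _ B 𝔭
end

section
/- Let A be a ring and let (a, b) be a regular sequence on A (a is a nonzero divisor on A and b is a nonzero divisor on A/aA). Let Â^a denote the a-adic completion of A, i.e. the inverse limit of the quotients A/a^nA. Then both a and b are nonzero divisors on Â^a. -/
/-!
Let `M` be a module on which `a` is regular and such that `b` is regular on `M ⧸ aM`. Cancelling one
factor `a` shows that `a • x ∈ aⁿ⁺¹M` implies `x ∈ aⁿM`: multiplication by `a` on the `a`-adic
completion loses only one step of precision. Cancelling factors `a` one at a time likewise shows
that `b` is regular on every `M ⧸ aⁿM`, and hence on their inverse limit.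
-/

open scoped Pointwise

section Module

variable {R M : Type*} [CommRing R] [AddCommGroup M] [Module R M]

theorem isSMulRegular_adicCompletion_of_forall_exists (I : Ideal R) {c : R}
    (h : ∀ n, ∃ m ≥ n, ∀ x : M, c • x ∈ (I ^ m • ⊤ : Submodule R M) →
      x ∈ (I ^ n • ⊤ : Submodule R M)) :
    IsSMulRegular (AdicCompletion I M) c := by
  refine .of_right_eq_zero_of_smul fun x hx ↦ AdicCompletion.ext fun n ↦ ?_
  obtain ⟨m, hnm, hm⟩ := h n
  obtain ⟨y, hy⟩ := Submodule.Quotient.mk_surjective _ (AdicCompletion.eval I M m x)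
  have hcy : c • y ∈ (I ^ m • ⊤ : Submodule R M) := by
    rw [← Submodule.Quotient.mk_eq_zero, Submodule.Quotient.mk_smul, hy, ← map_smul, hx, map_zero]
  calc
    AdicCompletion.eval I M n x
      = AdicCompletion.transitionMap I M hnm (AdicCompletion.eval I M m x) :=
      (AdicCompletion.transitionMap_comp_eval_apply I M hnm x).symm
    _ = AdicCompletion.transitionMap I M hnm (Submodule.Quotient.mk y) := by rw [hy]
    _ = 0 := (Submodule.Quotient.mk_eq_zero _).2 (hm y hcy)

theorem span_singleton_pow_smul (a : R) (n : ℕ) (N : Submodule R M) :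
    Ideal.span {a} ^ n • N = a ^ n • N := by
  rw [Ideal.span_singleton_pow, Submodule.ideal_span_singleton_smul]

theorem isSMulRegular_adicCompletion_span_singleton_self {a : R} (ha : IsSMulRegular M a) :
    IsSMulRegular (AdicCompletion (Ideal.span {a}) M) a := by
  refine isSMulRegular_adicCompletion_of_forall_exists _ fun n ↦ ⟨n + 1, n.le_succ, fun x hx ↦ ?_⟩
  rw [span_singleton_pow_smul, pow_succ', mul_smul] at hx
  rw [span_singleton_pow_smul]
  obtain ⟨y, hy, hyx⟩ := hx
  exact ha hyx ▸ hy

theorem isSMulRegular_quotient_smul {a b : R} {N : Submodule R M} (ha : IsSMulRegular M a)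
    (hb : IsSMulRegular (QuotSMulTop a M) b) (hN : IsSMulRegular (M ⧸ N) b) :
    IsSMulRegular (M ⧸ a • N) b := by
  rw [isSMulRegular_quotient_iff_mem_of_smul_mem]
  rintro x ⟨y, hy, hyx : a • y = b • x⟩
  obtain ⟨z, -, rfl : a • z = x⟩ := mem_of_isSMulRegular_quotient_of_smul_mem hb
    (hyx ▸ Submodule.smul_mem_pointwise_smul y a ⊤ trivial)
  have hyz : y = b • z := ha (hyx.trans (smul_comm b a z))
  have hz : z ∈ N := mem_of_isSMulRegular_quotient_of_smul_mem hN (hyz ▸ hy)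
  exact Submodule.smul_mem_pointwise_smul z a N hz

theorem isSMulRegular_quotSMulTop_pow {a b : R} (ha : IsSMulRegular M a)
    (hb : IsSMulRegular (QuotSMulTop a M) b) (n : ℕ) :
    IsSMulRegular (QuotSMulTop (a ^ n) M) b := by
  induction n with
  | zero => simp [isSMulRegular_quotient_iff_mem_of_smul_mem]
  | succ n ih =>
    change IsSMulRegular (M ⧸ a ^ (n + 1) • (⊤ : Submodule R M)) b
    rw [pow_succ', mul_smul]
    exact isSMulRegular_quotient_smul ha hb ih

theorem isSMulRegular_adicCompletion_span_singleton_of_quotSMulTop {a b : R}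
    (ha : IsSMulRegular M a) (hb : IsSMulRegular (QuotSMulTop a M) b) :
    IsSMulRegular (AdicCompletion (Ideal.span {a}) M) b := by
  refine isSMulRegular_adicCompletion_of_forall_exists _ fun n ↦ ⟨n, le_rfl, fun x hx ↦ ?_⟩
  rw [span_singleton_pow_smul] at hx ⊢
  exact mem_of_isSMulRegular_quotient_of_smul_mem (isSMulRegular_quotSMulTop_pow ha hb n) hx

theorem nonZeroDivisors_adicCompletion_of_regular_sequence_general {a b : R}
    (ha : IsSMulRegular M a) (hb : IsSMulRegular (QuotSMulTop a M) b) :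
    IsSMulRegular (AdicCompletion (Ideal.span {a}) M) a ∧
      IsSMulRegular (AdicCompletion (Ideal.span {a}) M) b :=
  ⟨isSMulRegular_adicCompletion_span_singleton_self ha,
    isSMulRegular_adicCompletion_span_singleton_of_quotSMulTop ha hb⟩

end Module

theorem algebraMap_mem_nonZeroDivisors_iff_isSMulRegular {R S : Type*} [CommSemiring R] [Ring S]
    [Algebra R S] {r : R} : algebraMap R S r ∈ nonZeroDivisors S ↔ IsSMulRegular S r := by
  simp only [mem_nonZeroDivisors_iff, isSMulRegular_iff_right_eq_zero_of_smul, Algebra.smul_def,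
    ← Algebra.commutes r, and_self]

theorem isSMulRegular_quotSMulTop_self_iff {R : Type*} [CommRing R] {a b : R} :
    IsSMulRegular (QuotSMulTop a R) b ↔ ∀ x, b * x ∈ Ideal.span {a} → x ∈ Ideal.span {a} := by
  simp [isSMulRegular_quotient_iff_mem_of_smul_mem, ← Submodule.ideal_span_singleton_smul]

/-- Let `A` be a ring and `(a, b)` a regular sequence on `A`.  Then `a` and
`b` are nonzero divisors on the `a`-adic completion of `A`. -/
theorem nonZeroDivisors_adicCompletion_of_regular_sequence
    (A : Type*) [CommRing A] (a b : A)
    (ha : a ∈ nonZeroDivisors A)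
    (hb : ∀ x : A, b * x ∈ Ideal.span {a} → x ∈ Ideal.span {a}) :
    algebraMap A (AdicCompletion (Ideal.span {a}) A) a
        ∈ nonZeroDivisors (AdicCompletion (Ideal.span {a}) A) ∧
    algebraMap A (AdicCompletion (Ideal.span {a}) A) b
        ∈ nonZeroDivisors (AdicCompletion (Ideal.span {a}) A) := by
  simp only [algebraMap_mem_nonZeroDivisors_iff_isSMulRegular]
  exact nonZeroDivisors_adicCompletion_of_regular_sequence_general
    (algebraMap_mem_nonZeroDivisors_iff_isSMulRegular.1 ha)
    (isSMulRegular_quotSMulTop_self_iff.2 hb)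
end

section
/- Let R be a Noetherian domain with a proper ideal I, let T be a normal ring that is a torsion-free integral extension of R, and fix a prime p. Assume π ∈ I is a nonzero element such that T admits a compatible system of p-power roots π^{1/p^n} ∈ T of π. Then T/IT is not (π)^{1/p^∞}-almost zero; that is, there exists n > 0 such that π^{1/p^n} ∉ IT. -/
/-!
If every `π^{1/p^n}` lay in `IT`, then `π` would lie in `(IT)^{p^n}` for all `n`, so it suffices to
prove Krull's intersection theorem in the form `R ∩ ⋂ₙ (IT)ⁿ = 0`.

* For principal `I = (a)`, Krull's principal ideal theorem gives a prime `P ∋ a` of height at most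
  one. For nonzero `x` it yields `aⁿ s = x y` with `s ∉ P`. If `x = aⁿ⁺¹ z` with `z` integral over
  `R`, cancelling `aⁿ` writes `s` as `a` times the integral element `z y`, and the integral equation
  of `z y` forces `a ∣ sᵐ`, hence `s ∈ P`.
* The extended Rees algebra `R[It, t⁻¹]` reduces the general case to the principal ideal `(t⁻¹)`:
  if `x ∈ (IT)ⁿ`, then `x = (t⁻¹)ⁿ (x tⁿ)`, where `x tⁿ` is integral over `R[It, t⁻¹]`.
-/

section PrincipalIdeal

variable {S : Type*} [CommRing S] [IsDomain S]

theorem exists_dvd_pow_mul_of_height_le_one {P : Ideal S} [P.IsPrime] (hP : P.height ≤ 1)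
    {a x : S} (ha : a ∈ P) (hx : x ≠ 0) : ∃ n, ∃ s ∉ P, x ∣ a ^ n * s := by
  by_contra! h
  have hdisj : Disjoint (Ideal.span {x} : Set S) ↑(Submonoid.powers a ⊔ P.primeCompl) := by
    refine Set.disjoint_left.2 fun y hxy hy ↦ ?_
    obtain ⟨_, ⟨n, rfl⟩, s, hs, rfl⟩ := Submonoid.mem_sup.1 hy
    exact h n s hs (Ideal.mem_span_singleton.1 hxy)
  obtain ⟨Q, hQ, hxQ, hQdisj⟩ := Ideal.exists_le_prime_disjoint _ _ hdisj
  rw [Set.disjoint_left] at hQdisj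
  have hQP : Q < P := by
    refine SetLike.lt_iff_le_and_exists.2 ⟨fun y hy ↦ by_contra fun hyP ↦ ?_, a, ha, fun haQ ↦ ?_⟩
    · exact hQdisj hy (Submonoid.mem_sup_right (show y ∈ P.primeCompl from hyP))
    · exact hQdisj haQ (Submonoid.mem_sup_left (Submonoid.mem_powers a))
  have hQ_bot : Q = ⊥ := by
    rw [← Ideal.height_eq_zero_iff_eq_bot, ← Order.lt_one_iff]
    exact Ideal.height_le_iff (n := 1).1 hP Q hQ hQP
  exact hx (by simpa [hQ_bot] using hxQ)

theorem eq_zero_of_forall_exists_isIntegral_pow_mul_eq [IsNoetherianRing S] {A : Type*}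
    [CommRing A] [Algebra S A] [FaithfulSMul S A] {a x : S} (ha : ¬IsUnit a)
    (ha_reg : algebraMap S A a ∈ nonZeroDivisors A)
    (h : ∀ n, ∃ z : A, IsIntegral S z ∧ algebraMap S A a ^ n * z = algebraMap S A x) : x = 0 := by
  by_contra hx
  obtain ⟨P, hP⟩ := Ideal.nonempty_minimalPrimes (Ideal.span_singleton_eq_top.not.2 ha)
  have := hP.isPrime
  have haP : a ∈ P := hP.le (Ideal.mem_span_singleton_self a)
  obtain ⟨n, s, hs, y, hy⟩ := exists_dvd_pow_mul_of_height_le_one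
    (Ideal.height_le_one_of_isPrincipal_of_mem_minimalPrimes _ P hP) haP hx
  obtain ⟨z, hz_int, hz⟩ := h (n + 1)
  have has : algebraMap S A a * (z * algebraMap S A y) = algebraMap S A s := by
    refine (mul_cancel_left_mem_nonZeroDivisors (pow_mem ha_reg n)).1 ?_
    calc algebraMap S A a ^ n * (algebraMap S A a * (z * algebraMap S A y))
        = algebraMap S A a ^ (n + 1) * z * algebraMap S A y := by ring
      _ = algebraMap S A a ^ n * algebraMap S A s := by rw [hz, ← map_mul, ← hy, map_mul, map_pow]
  obtain ⟨f, hf, hfz⟩ := hz_int.mul (isIntegral_algebraMap (x := y))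
  have hdvd : a ∣ s ^ f.natDegree := Polynomial.dvd_pow_natDegree_of_eval₂_eq_zero
    (FaithfulSMul.algebraMap_injective S A) hf a s _ hfz has
  exact hs (hP.isPrime.mem_of_pow_mem _ (P.mem_of_dvd hdvd haP))

end PrincipalIdeal

section ExtendedRees

open LaurentPolynomial

variable {R : Type*} [CommRing R]

/-- The extended Rees algebra `R[It, t⁻¹]` of an ideal `I`, used to replace `I` by the principal
ideal `(t⁻¹)`. As for `reesAlgebra`, it is encoded by the condition that the coefficient of `tⁿ`
lies in `Iⁿ`; here `Iⁿ = R` for `n < 0`. -/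
def extendedReesAlgebra (I : Ideal R) : Subalgebra R R[T;T⁻¹] where
  carrier := {f | ∀ n : ℤ, f.coeff n ∈ I ^ n.toNat}
  mul_mem' {f g} hf hg n := by
    classical
    rw [AddMonoidAlgebra.coeff_mul]
    refine Ideal.sum_mem _ fun i _ ↦ Ideal.sum_mem _ fun j _ ↦ ?_
    dsimp only
    split_ifs with h
    · have hij : n.toNat ≤ i.toNat + j.toNat := by lia
      exact Ideal.pow_le_pow_right hij (pow_add I _ _ ▸ Ideal.mul_mem_mul (hf i) (hg j))
    · exact zero_mem _
  add_mem' hf hg n := add_mem (hf n) (hg n)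
  algebraMap_mem' r n := by
    rw [← C_eq_algebraMap, C_apply]
    split_ifs with h <;> simp [h]

variable {I : Ideal R}

theorem C_mul_T_mem_extendedReesAlgebra_iff {r : R} {n : ℤ} :
    C r * T n ∈ extendedReesAlgebra I ↔ r ∈ I ^ n.toNat := by
  have hcoeff (m : ℤ) : (C r * T n).coeff m = if n = m then r else 0 := by
    rw [← single_eq_C_mul_T, AddMonoidAlgebra.coeff_single, Finsupp.single_apply]
  refine ⟨fun h ↦ by simpa only [hcoeff, if_pos] using h n, fun h m ↦ ?_⟩
  rw [hcoeff]
  split_ifs with hm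
  · exact hm ▸ h
  · exact zero_mem _

theorem T_mem_extendedReesAlgebra_iff {n : ℤ} :
    T n ∈ extendedReesAlgebra I ↔ I ^ n.toNat = ⊤ := by
  rw [Ideal.eq_top_iff_one, ← C_mul_T_mem_extendedReesAlgebra_iff, map_one, one_mul]

theorem T_neg_one_mem_extendedReesAlgebra (I : Ideal R) : T (-1) ∈ extendedReesAlgebra I := by
  simp [T_mem_extendedReesAlgebra_iff]

theorem extendedReesAlgebra_eq_map_reesAlgebra_sup_adjoin (I : Ideal R) :
    extendedReesAlgebra I =
      (reesAlgebra I).map Polynomial.toLaurentAlg ⊔ Algebra.adjoin R {T (-1)} := by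
  refine le_antisymm (fun f hf ↦ ?_)
    (sup_le ?_ (Algebra.adjoin_singleton_le (T_neg_one_mem_extendedReesAlgebra I)))
  · rw [← f.sum_coeff_single]
    refine sum_mem fun n _ ↦ ?_
    rw [single_eq_C_mul_T]
    obtain ⟨n, rfl | rfl⟩ := n.eq_nat_or_neg
    · rw [← Polynomial.toLaurent_C_mul_T]
      exact Algebra.mem_sup_left ⟨_, reesAlgebra.monomial_mem.2 (hf n), rfl⟩
    · have hT : (T (-n) : R[T;T⁻¹]) = T (-1) ^ n := by rw [T_pow, mul_neg_one]
      rw [← smul_eq_C_mul, hT]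
      exact Algebra.mem_sup_right
        (Subalgebra.smul_mem _ (pow_mem (Algebra.self_mem_adjoin_singleton R _) n) _)
  · rintro _ ⟨g, hg, rfl⟩
    rw [g.as_sum_support, map_sum]
    refine sum_mem fun n _ ↦ ?_
    change Polynomial.toLaurent _ ∈ _
    rw [Polynomial.toLaurent_C_mul_T]
    exact C_mul_T_mem_extendedReesAlgebra_iff.2 (hg n)

theorem extendedReesAlgebra_fg (hI : I.FG) : (extendedReesAlgebra I).FG := by
  rw [extendedReesAlgebra_eq_map_reesAlgebra_sup_adjoin]
  exact ((reesAlgebra.fg hI).map _).sup ⟨{T (-1)}, by rw [Finset.coe_singleton]⟩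

instance [IsNoetherianRing R] : IsNoetherianRing (extendedReesAlgebra I) :=
  isNoetherianRing_of_fg (extendedReesAlgebra_fg (IsNoetherian.noetherian I))

theorem not_isUnit_extendedReesAlgebra_T_neg_one (hI : I ≠ ⊤) :
    ¬IsUnit (⟨T (-1), T_neg_one_mem_extendedReesAlgebra I⟩ : extendedReesAlgebra I) := by
  intro hunit
  obtain ⟨⟨v, hv_mem⟩, hv⟩ := hunit.exists_right_inv
  have hv : T (-1) * v = 1 := congrArg Subtype.val hv
  have hvT : v = T 1 := by
    calc v = T 1 * (T (-1) * v) := by rw [← mul_assoc, ← T_add, add_neg_cancel, T_zero, one_mul]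
      _ = T 1 := by rw [hv, mul_one]
  have hI_pow : I ^ (1 : ℤ).toNat = ⊤ := T_mem_extendedReesAlgebra_iff.1 (hvT ▸ hv_mem)
  exact hI ((pow_one I).symm.trans hI_pow)

end ExtendedRees

section KrullIntersection

open LaurentPolynomial
open scoped AlgebraMonoidAlgebra

variable {R B : Type*} [CommRing R] [CommRing B] [Algebra R B] {I : Ideal R}

theorem algebraMap_laurentPolynomial_C_mul_T (r : R) (n : ℤ) :
    algebraMap R[T;T⁻¹] B[T;T⁻¹] (C r * T n) = C (algebraMap R B r) * T n := by
  simp only [← single_eq_C_mul_T, AddMonoidAlgebra.algebraMap_def,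
    AddMonoidAlgebra.mapRingHom_single]

instance [FaithfulSMul R B] : FaithfulSMul (extendedReesAlgebra I) B[T;T⁻¹] := by
  rw [faithfulSMul_iff_algebraMap_injective]
  have hRB := FaithfulSMul.algebraMap_injective R B
  exact (AddMonoidAlgebra.map_injective (algebraMap R B : R →+ B) hRB).comp Subtype.val_injective

theorem isIntegral_extendedReesAlgebra_C_mul_T [Algebra.IsIntegral R B] {b : B} {n : ℕ}
    (hb : b ∈ I.map (algebraMap R B) ^ n) :
    IsIntegral (extendedReesAlgebra I) (C b * T n : B[T;T⁻¹]) := by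
  rw [← Ideal.map_pow] at hb
  induction hb using Submodule.span_induction with
  | zero => simpa using isIntegral_zero
  | add b c _ _ hb hc => simpa only [map_add, add_mul] using hb.add hc
  | smul c b _ hb =>
    have hc : IsIntegral (extendedReesAlgebra I) (C c : B[T;T⁻¹]) :=
      ((Algebra.IsIntegral.isIntegral (R := R) c).algebraMap (B := B[T;T⁻¹])).tower_top
    simpa only [smul_eq_mul, map_mul, mul_assoc] using hc.mul hb
  | mem b hb =>
    obtain ⟨i, hi, rfl⟩ := hb
    rw [← Int.toNat_natCast n] at hi
    rw [← algebraMap_laurentPolynomial_C_mul_T]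
    exact isIntegral_algebraMap (R := extendedReesAlgebra I)
      (x := ⟨_, C_mul_T_mem_extendedReesAlgebra_iff.2 hi⟩)

variable (B) in
theorem comap_iInf_map_pow_eq_bot_of_isIntegral [IsDomain R] [IsNoetherianRing R]
    [FaithfulSMul R B] [Algebra.IsIntegral R B] (hI : I ≠ ⊤) :
    (⨅ n : ℕ, I.map (algebraMap R B) ^ n).comap (algebraMap R B) = ⊥ := by
  refine (Submodule.eq_bot_iff _).2 fun x hx ↦ ?_
  rw [Ideal.mem_comap, Ideal.mem_iInf] at hx
  let tInv : extendedReesAlgebra I := ⟨T (-1), T_neg_one_mem_extendedReesAlgebra I⟩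
  have htInv : algebraMap _ B[T;T⁻¹] tInv = T (-1) := by
    change algebraMap R[T;T⁻¹] B[T;T⁻¹] (T (-1)) = _
    simpa only [map_one, one_mul] using algebraMap_laurentPolynomial_C_mul_T (B := B) (1 : R) (-1)
  suffices algebraMap R (extendedReesAlgebra I) x = 0 from
    (map_eq_zero_iff _ (FaithfulSMul.algebraMap_injective _ _)).1 this
  refine eq_zero_of_forall_exists_isIntegral_pow_mul_eq (A := B[T;T⁻¹])
    (not_isUnit_extendedReesAlgebra_T_neg_one hI) (htInv ▸ (isUnit_T _).mem_nonZeroDivisors)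
    fun n ↦ ⟨_, isIntegral_extendedReesAlgebra_C_mul_T (hx n), ?_⟩
  calc algebraMap _ B[T;T⁻¹] tInv ^ n * (C (algebraMap R B x) * T n)
      = C (algebraMap R B x) * T (-n + n) := by
        rw [htInv, T_pow, mul_neg_one, mul_left_comm, ← T_add]
    _ = C (algebraMap R B x) := by rw [neg_add_cancel, T_zero, mul_one]
    _ = algebraMap _ B[T;T⁻¹] (algebraMap R (extendedReesAlgebra I) x) := by
        rw [← IsScalarTower.algebraMap_apply, C_eq_algebraMap, ← IsScalarTower.algebraMap_apply]

end KrullIntersection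

theorem pow_pow_eq_of_forall_pow_eq {M : Type*} [Monoid M] {p : ℕ} {r : ℕ → M}
    (hr : ∀ n, r (n + 1) ^ p = r n) (n : ℕ) : r n ^ p ^ n = r 0 := by
  induction n with
  | zero => rw [pow_zero, pow_one]
  | succ n ih => rw [pow_succ', pow_mul, hr, ih]

theorem exists_pPowRoot_not_mem_map_of_proper_ideal_general
    {R : Type*} [CommRing R] [IsDomain R] [IsNoetherianRing R] {I : Ideal R} (hI : I ≠ ⊤)
    {T : Type*} [CommRing T] [Algebra R T] [FaithfulSMul R T] [Algebra.IsIntegral R T]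
    {p : ℕ} (hp : 1 < p) {π : R} (hπ0 : π ≠ 0)
    {r : ℕ → T} (hr0 : r 0 = algebraMap R T π) (hr : ∀ n, r (n + 1) ^ p = r n) :
    ∃ n : ℕ, 0 < n ∧ r n ∉ I.map (algebraMap R T) := by
  by_contra! hmem
  have hπ : π ∈ (⨅ n : ℕ, I.map (algebraMap R T) ^ n).comap (algebraMap R T) := by
    refine Ideal.mem_comap.2 (Ideal.mem_iInf.2 fun n ↦ ?_)
    have hn : n ≤ p ^ (n + 1) := n.le_succ.trans (Nat.lt_pow_self hp).le
    rw [← hr0, ← pow_pow_eq_of_forall_pow_eq hr (n + 1)]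
    exact Ideal.pow_le_pow_right hn (Ideal.pow_mem_pow (hmem (n + 1) n.succ_pos) _)
  rw [comap_iInf_map_pow_eq_bot_of_isIntegral T hI] at hπ
  exact hπ0 hπ

/-- Let `R` be a Noetherian domain with a proper ideal `I`, let `T` be a
normal ring that is a torsion-free integral extension of `R`, and fix a prime `p`.  If
`π ∈ I` is nonzero and `T` admits a compatible system of `p`-power roots of `π`, then `T/IT`
is not `(π)^{1/p^∞}`-almost zero; that is, there exists `n > 0` with `π^{1/p^n} ∉ IT`. -/
theorem exists_pPowRoot_not_mem_map_of_proper_ideal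
    (R : Type*) [CommRing R] [IsDomain R] [IsNoetherianRing R]
    (I : Ideal R) (hI : I ≠ ⊤)
    (T : Type*) [CommRing T] [Algebra R T]
    (hinj : Function.Injective (algebraMap R T))
    [Algebra.IsIntegral R T]
    (htf : ∀ r : R, r ≠ 0 → ∀ x : T, algebraMap R T r * x = 0 → x = 0)
    (hnormal : ∀ (P : Ideal T), ∀ [P.IsPrime],
        IsDomain (Localization.AtPrime P) ∧ IsIntegrallyClosed (Localization.AtPrime P))
    (p : ℕ) (hp : p.Prime)
    (π : R) (hπ0 : π ≠ 0) (hπI : π ∈ I)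
    (r : ℕ → T) (hr0 : r 0 = algebraMap R T π) (hr : ∀ n, r (n + 1) ^ p = r n) :
    ∃ n : ℕ, 0 < n ∧ r n ∉ I.map (algebraMap R T) := by
  have : FaithfulSMul R T := (faithfulSMul_iff_algebraMap_injective R T).2 hinj
  exact exists_pPowRoot_not_mem_map_of_proper_ideal_general hI hp.one_lt hπ0 hr0 hr
end

section
/- Let A ⊆ B be an integral ring extension and let I ⊆ A be an ideal. Then: (1) the induced ring map (1+I)^{-1}A → (1+IB)^{-1}B between the Zariskizations is integral; (2) if {A_λ}_{λ∈Λ} is the filtered system of all module-finite A-subalgebras of B, then the canonical ring map colim_λ (1+IA_λ)^{-1}A_λ → (1+IB)^{-1}B is an isomorphism. -/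
/-- The multiplicative set `1 + I` associated to an ideal `I`. -/
def oneAddSubmonoid {A : Type*} [CommRing A] (I : Ideal A) : Submonoid A where
  carrier := {x | ∃ i ∈ I, x = 1 + i}
  one_mem' := ⟨0, I.zero_mem, by ring⟩
  mul_mem' := by
    rintro x y ⟨i, hi, rfl⟩ ⟨j, hj, rfl⟩
    exact ⟨i + j + i * j, I.add_mem (I.add_mem hi hj) (Ideal.mul_mem_left I i hj), by ring⟩

/-- The `I`-adic Zariskization `(1+I)⁻¹A` of a ring `A`. -/
abbrev Zariskization {A : Type*} [CommRing A] (I : Ideal A) : Type _ :=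
  Localization (oneAddSubmonoid I)

lemma oneAddSubmonoid_mono {A : Type*} [CommRing A] {I J : Ideal A} (h : I ≤ J) :
    oneAddSubmonoid I ≤ oneAddSubmonoid J := by
  rintro x ⟨i, hi, rfl⟩
  exact ⟨i, h hi, rfl⟩

lemma oneAddSubmonoid_le_comap {A B : Type*} [CommRing A] [CommRing B] (φ : A →+* B)
    (I : Ideal A) :
    oneAddSubmonoid I ≤ Submonoid.comap φ (oneAddSubmonoid (I.map φ)) := by
  rintro x ⟨i, hi, rfl⟩
  exact ⟨φ i, Ideal.mem_map_of_mem φ hi, by rw [map_add, map_one]⟩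

section

variable {A B : Type*} [CommRing A] [CommRing B] [Algebra A B] (I : Ideal A)

lemma zarTransition_le {S S' : Subalgebra A B} (h : S ≤ S') :
    oneAddSubmonoid (I.map (algebraMap A ↥S)) ≤
      Submonoid.comap (Subalgebra.inclusion h).toRingHom
        (oneAddSubmonoid (I.map (algebraMap A ↥S'))) := by
  intro x hx
  have h1 := oneAddSubmonoid_le_comap (Subalgebra.inclusion h).toRingHom
    (I.map (algebraMap A ↥S)) hx
  rw [Submonoid.mem_comap] at h1 ⊢
  refine oneAddSubmonoid_mono ?_ h1
  rw [Ideal.map_map]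
  exact le_of_eq (congrArg (fun φ => Ideal.map φ I) (RingHom.ext fun a => Subtype.ext rfl))

lemma zarToAmbient_le (S : Subalgebra A B) :
    oneAddSubmonoid (I.map (algebraMap A ↥S)) ≤
      Submonoid.comap S.val.toRingHom (oneAddSubmonoid (I.map (algebraMap A B))) := by
  intro x hx
  have h1 := oneAddSubmonoid_le_comap S.val.toRingHom (I.map (algebraMap A ↥S)) hx
  rw [Submonoid.mem_comap] at h1 ⊢
  refine oneAddSubmonoid_mono ?_ h1
  rw [Ideal.map_map]
  exact le_of_eq (congrArg (fun φ => Ideal.map φ I) (RingHom.ext fun a => rfl))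

/-- The transition homomorphism between the Zariskizations of two subalgebras. -/
noncomputable def zarTransition {S S' : Subalgebra A B} (h : S ≤ S') :
    Zariskization (I.map (algebraMap A ↥S)) →+* Zariskization (I.map (algebraMap A ↥S')) :=
  IsLocalization.map (Zariskization (I.map (algebraMap A ↥S')))
    (Subalgebra.inclusion h).toRingHom (zarTransition_le I h)

/-- The canonical homomorphism from the Zariskization of a subalgebra of `B` to the
Zariskization of `B`. -/
noncomputable def zarToAmbient (S : Subalgebra A B) :
    Zariskization (I.map (algebraMap A ↥S)) →+* Zariskization (I.map (algebraMap A B)) :=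
  IsLocalization.map (Zariskization (I.map (algebraMap A B)))
    S.val.toRingHom (zarToAmbient_le I S)

/-- The index type of all module-finite `A`-subalgebras of `B`. -/
abbrev FinSubalg (A B : Type*) [CommRing A] [CommRing B] [Algebra A B] :=
  {S : Subalgebra A B // (Subalgebra.toSubmodule S).FG}

lemma zar_compat {i j : FinSubalg A B} (hij : i ≤ j)
    (x : Zariskization (I.map (algebraMap A ↥i.1))) :
    zarToAmbient I j.1 (zarTransition I hij x) = zarToAmbient I i.1 x := by
  have : (zarToAmbient I j.1).comp (zarTransition I hij) = zarToAmbient I i.1 := by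
    apply IsLocalization.ringHom_ext (oneAddSubmonoid (I.map (algebraMap A ↥i.1)))
    ext a
    simp [zarToAmbient, zarTransition, IsLocalization.map_eq]
  exact DFunLike.congr_fun this x

/-- The canonical homomorphism from the direct limit of the Zariskizations of the
module-finite subalgebras of `B` to the Zariskization of `B`. -/
noncomputable def zarCanonicalMap :
    Ring.DirectLimit (fun S : FinSubalg A B => Zariskization (I.map (algebraMap A ↥S.1)))
        (fun _ _ h => zarTransition I h) →+*
      Zariskization (I.map (algebraMap A B)) :=
  Ring.DirectLimit.lift _ _ _ (fun S => zarToAmbient I S.1) (fun _ _ hij x => zar_compat I hij x)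

end

/-!
The point is that `1 + IB` and the image of `1 + I` in `B` have the same saturation. An element `x`
of `IB` is a root of a monic polynomial `p` whose lower coefficients lie in `I`, so `1 - x` divides
`p(1) - p(x) = p(1)`, which lies in `1 + I`. Hence `(1 + IB)⁻¹B` is the localization `(1 + I)⁻¹B` of
`B` at a multiplicative set coming from `A`, and likewise for every subalgebra of `B`. Localization
at `1 + I` preserves integrality and injectivity, and every fraction `b / m` with `m` in `1 + I`
already lives over the module-finite subalgebra `A[b]`.
-/

section OneAddSubmonoid

variable {A : Type*} [CommRing A] (B : Type*) [CommRing B] [Algebra A B] {I : Ideal A}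

open Polynomial in
lemma eval_one_mem_oneAddSubmonoid {p : A[X]} (hp : p.Monic)
    (hcoeff : ∀ i ≠ p.natDegree, p.coeff i ∈ I) : p.eval 1 ∈ oneAddSubmonoid I := by
  refine ⟨∑ i ∈ Finset.range p.natDegree, p.coeff i,
    I.sum_mem fun i hi ↦ hcoeff i (Finset.mem_range.mp hi).ne, ?_⟩
  conv_lhs => rw [hp.as_sum]
  simp [eval_finsetSum]

variable (I) in
lemma algebraMapSubmonoid_oneAddSubmonoid_le :
    Algebra.algebraMapSubmonoid B (oneAddSubmonoid I) ≤
      oneAddSubmonoid (I.map (algebraMap A B)) :=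
  Submonoid.map_le_iff_le_comap.mpr (oneAddSubmonoid_le_comap (algebraMap A B) I)

variable {B} in
lemma exists_dvd_algebraMap_of_mem_oneAddSubmonoid_map [Algebra.IsIntegral A B] {s : B}
    (hs : s ∈ oneAddSubmonoid (I.map (algebraMap A B))) :
    ∃ m ∈ oneAddSubmonoid I, s ∣ algebraMap A B m := by
  obtain ⟨x, hx, rfl⟩ := hs
  obtain ⟨p, hp, hroot, hcoeff⟩ :=
    Polynomial.exists_monic_aeval_eq_zero_forall_mem_of_mem_map (neg_mem hx)
  refine ⟨p.eval 1, eval_one_mem_oneAddSubmonoid hp hcoeff, ?_⟩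
  have hdvd := Polynomial.sub_dvd_eval_sub 1 (-x) (p.map (algebraMap A B))
  rwa [sub_neg_eq_add, Polynomial.eval_map_algebraMap p (-x), hroot, sub_zero,
    Polynomial.eval_one_map] at hdvd

variable (I) in
instance isLocalization_zariskization_map [Algebra.IsIntegral A B] :
    IsLocalization (Algebra.algebraMapSubmonoid B (oneAddSubmonoid I))
      (Zariskization (I.map (algebraMap A B))) := by
  refine (IsLocalization.iff_of_le_of_exists_dvd _ _
    (algebraMapSubmonoid_oneAddSubmonoid_le B I) fun s hs ↦ ?_).mpr inferInstance
  obtain ⟨m, hm, hdvd⟩ := exists_dvd_algebraMap_of_mem_oneAddSubmonoid_map hs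
  exact ⟨algebraMap A B m, Algebra.mem_algebraMapSubmonoid_of_mem ⟨m, hm⟩, hdvd⟩

end OneAddSubmonoid

section FinSubalg

variable (A B : Type*) [CommRing A] [CommRing B] [Algebra A B]

instance nonempty_finSubalg : Nonempty (FinSubalg A B) :=
  ⟨⟨⊥, Subalgebra.fg_bot_toSubmodule⟩⟩

instance isDirectedOrder_finSubalg : IsDirectedOrder (FinSubalg A B) where
  directed S T := ⟨⟨S.1 ⊔ T.1, Subalgebra.mul_toSubmodule S.1 T.1 ▸ S.2.mul T.2⟩,
    Subtype.coe_le_coe.mp le_sup_left, Subtype.coe_le_coe.mp le_sup_right⟩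

variable {B} in
lemma exists_finSubalg_mem [Algebra.IsIntegral A B] (b : B) : ∃ S : FinSubalg A B, b ∈ S.1 :=
  ⟨⟨Algebra.adjoin A {b}, (Algebra.IsIntegral.isIntegral b).fg_adjoin_singleton⟩,
    Algebra.self_mem_adjoin_singleton A b⟩

end FinSubalg

section Zariskization

variable {A B : Type*} [CommRing A] [CommRing B] [Algebra A B] [Algebra.IsIntegral A B]
  (I : Ideal A)

lemma isIntegral_zariskization_map :
    (IsLocalization.map (Zariskization (I.map (algebraMap A B))) (algebraMap A B)
        (oneAddSubmonoid_le_comap (algebraMap A B) I) :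
          Zariskization I →+* Zariskization (I.map (algebraMap A B))).IsIntegral :=
  isIntegral_localization (M := oneAddSubmonoid I)

lemma zarToAmbient_injective (S : Subalgebra A B) : Function.Injective (zarToAmbient I S) := by
  have : Algebra.IsIntegral A S := .of_injective S.val Subtype.val_injective
  let N := Algebra.algebraMapSubmonoid S (oneAddSubmonoid I)
  have hmap : IsLocalization.map _ S.val.toRingHom N.le_comap_map = zarToAmbient I S :=
    IsLocalization.map_unique _ _ fun x ↦ IsLocalization.map_eq (zarToAmbient_le I S) x
  exact hmap ▸ IsLocalization.map_injective_of_injective N _ _ Subtype.val_injective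

lemma exists_zarToAmbient_eq (z : Zariskization (I.map (algebraMap A B))) :
    ∃ (S : FinSubalg A B) (y : Zariskization (I.map (algebraMap A S.1))),
      zarToAmbient I S.1 y = z := by
  obtain ⟨⟨b, _, m, hm, rfl⟩, hz⟩ :=
    IsLocalization.surj (Algebra.algebraMapSubmonoid B (oneAddSubmonoid I)) z
  obtain ⟨S, hb⟩ := exists_finSubalg_mem A b
  refine ⟨S, IsLocalization.mk' (M := oneAddSubmonoid (I.map (algebraMap A S.1))) _ ⟨b, hb⟩
    ⟨algebraMap A S.1 m, oneAddSubmonoid_le_comap (algebraMap A S.1) I hm⟩, ?_⟩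
  rw [zarToAmbient, IsLocalization.map_mk', IsLocalization.mk'_eq_iff_eq_mul]
  exact hz.symm

lemma zarCanonicalMap_injective : Function.Injective (zarCanonicalMap (B := B) I) :=
  Ring.DirectLimit.lift_injective _ _ _ fun S ↦ zarToAmbient_injective I S.1

lemma zarCanonicalMap_surjective : Function.Surjective (zarCanonicalMap (B := B) I) := by
  intro z
  obtain ⟨S, y, rfl⟩ := exists_zarToAmbient_eq I z
  exact ⟨Ring.DirectLimit.of _ _ S y, Ring.DirectLimit.lift_of ..⟩

theorem zariskization_integral_and_colimit_general :
    (IsLocalization.map (Zariskization (I.map (algebraMap A B))) (algebraMap A B)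
        (oneAddSubmonoid_le_comap (algebraMap A B) I) :
          Zariskization I →+* Zariskization (I.map (algebraMap A B))).IsIntegral ∧
    Function.Bijective (zarCanonicalMap (A := A) (B := B) I) :=
  ⟨isIntegral_zariskization_map I, zarCanonicalMap_injective I, zarCanonicalMap_surjective I⟩

end Zariskization

/-- Let `A ⊆ B` be an integral ring extension and `I ⊆ A` an ideal.  Then
(1) the induced map `(1+I)⁻¹A → (1+IB)⁻¹B` of Zariskizations is integral, and
(2) the canonical map from the direct limit of the Zariskizations of the module-finite
`A`-subalgebras of `B` to `(1+IB)⁻¹B` is bijective. -/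
theorem zariskization_integral_and_colimit
    (A B : Type*) [CommRing A] [CommRing B] [Algebra A B]
    (hinj : Function.Injective (algebraMap A B))
    [Algebra.IsIntegral A B] (I : Ideal A) :
    -- (1)
    (IsLocalization.map (Zariskization (I.map (algebraMap A B))) (algebraMap A B)
        (oneAddSubmonoid_le_comap (algebraMap A B) I) :
          Zariskization I →+* Zariskization (I.map (algebraMap A B))).IsIntegral ∧
    -- (2)
    Function.Bijective (zarCanonicalMap (A := A) (B := B) I) :=
  zariskization_integral_and_colimit_general I
end
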